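/- arXiv:1905.08001 — 2 statements merged into one kernel-verified Lean document; each statement's English description precedes it below -/
import Mathlib

section
/- Let F be a multigraph, let k ≥ 1 and K ≥ 1 be integers, and let H = F^{2k-1}. There exist constants L0 and C, depending only on |V(H)|, k and K, such that for all L ≥ L0 the following holds: if G is an H-free K-almost-regular graph on n vertices (n sufficiently large) with minimum degree δ ≥ L^{100^k·|V(H)|}, then the number of paths u_{−k}u_{−k+1}…u_k of length 2k in G with the property that for some −k ≤ j ≤ 0 the subpath u_j u_{j+1}…u_{j+k} is not L-good is at most C·n·δ^{2k}/L. -/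
/-!
A path of length `k` that is not good has a shortest subpath that is not good, and this subpath is
admissible (`exists_bad_sub`). Extending subpaths to walks of length `2k` costs a factor of at most
the maximum degree per step (`extend_count`), so by `count_of_few_bad` it is enough to show that
for each `2 ≤ ℓ ≤ k` at most `n δ^ℓ / L` paths of length `ℓ` are bad, i.e. admissible but not good.

The ends of a bad path are joined by more than `f(ℓ, L)` admissible paths, of which only few use a
given inner vertex (`admSet_through`, by goodness of the two halves). So the ends are *robustly*
joined (`Rob`, `rob_of_bad`): a path of length `ℓ` between them survives the deletion of any vertex
set of bounded size. If enough vertices are pairwise robustly joined by paths of length `2k`, the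
subdivision is found greedily (`contains_of_rob`), so it remains to produce such vertices from too
many bad paths (`contains_of_many_bad`).

Some vertex `u` is the second vertex of at least `δ^ℓ / L` bad paths. After cleaning (`clean`)
their first vertices lie in a set `Y` of neighbours of `u`, and their last vertices lie in a set `X`
each element of which is robustly joined to a positive proportion (depending on `L`) of `Y`.
Averaging yields `y₀ ∈ Y` with many admissible paths of length `ℓ` to `X`
(`exists_many_admissible`). The number of these is so large, by the choice of `f`, that there are
many vertices `w` from which many disjoint paths of length `r = k mod ℓ` lead to `X`
(`exists_hitting`, `card_le_of_few_fans`). Each such `w` is robustly joined by paths of length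
`r + ℓ` to a positive proportion of `Y` (`rob_of_fan`). Two Kővári–Sós–Turán counts
(`kst`, `exists_three_sets`) give sets `A` of such vertices `w`, `Y' ⊆ Y` and `X'`, of bounded but
sufficient size, such that all pairs in `A × Y'` are robustly joined by paths of length `r + ℓ` and
all pairs in `Y' × X'` by paths of length `ℓ`. Going from `A` to `Y'`, alternating between `Y'` and
`X'`, and going back to `A` joins any two vertices of `A` robustly by paths of length
`2 (q ℓ + r) = 2k`, where `q = ⌊k / ℓ⌋` (`rob_chain`).
-/

open SimpleGraph

variable {V : Type*} [Fintype V] [DecidableEq V]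

/-- The restriction of `p : ℕ → V` to `[0, ℓ]` is a path in `G`: consecutive vertices are
adjacent and all vertices `p 0, …, p ℓ` are distinct. -/
def PathSeq (G : SimpleGraph V) (ℓ : ℕ) (p : ℕ → V) : Prop :=
  (∀ i, i < ℓ → G.Adj (p i) (p (i + 1))) ∧
  ∀ i j, i < j → j ≤ ℓ → p i ≠ p j

/-- `p` is padded beyond index `ℓ`; used so that each finite sequence corresponds to a
unique function `ℕ → V` when counting. -/
def PadSeq (ℓ : ℕ) (p : ℕ → V) : Prop := ∀ i, ℓ ≤ i → p i = p ℓ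

/-- `f(ℓ, L) = L^(5^ℓ)`. -/
noncomputable def fBound (ℓ : ℕ) (L : ℝ) : ℝ := L ^ (5 ^ ℓ)

/-- The recursive notion of an `L`-good path of length `ℓ` (as a sequence `p 0, …, p ℓ`):
`p` is a path, every proper subpath is `L`-good, and the number of `L`-admissible paths of
length `ℓ` from `p 0` to `p ℓ` is at most `f(ℓ, L)`. -/
def Good (G : SimpleGraph V) (L : ℝ) (ℓ : ℕ) (p : ℕ → V) : Prop :=
  (PathSeq G ℓ p ∧
    ∀ i j, i < j → j ≤ ℓ → ¬(i = 0 ∧ j = ℓ) → Good G L (j - i) (fun a => p (i + a))) ∧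
  (Set.ncard {q : ℕ → V | q 0 = p 0 ∧ q ℓ = p ℓ ∧ PadSeq ℓ q ∧ PathSeq G ℓ q ∧
      ∀ i j, i < j → j ≤ ℓ → ¬(i = 0 ∧ j = ℓ) → Good G L (j - i) (fun a => q (i + a))} : ℝ)
    ≤ fBound ℓ L
termination_by ℓ
decreasing_by all_goals omega

/-- `L`-admissible: a path all of whose proper subpaths are `L`-good. -/
def Admissible (G : SimpleGraph V) (L : ℝ) (ℓ : ℕ) (p : ℕ → V) : Prop :=
  PathSeq G ℓ p ∧
    ∀ i j, i < j → j ≤ ℓ → ¬(i = 0 ∧ j = ℓ) → Good G L (j - i) (fun a => p (i + a))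

/-- There exist `N` pairwise internally vertex-disjoint paths of length `m` from `x` to `y`. -/
def ManyDisjointPaths (G : SimpleGraph V) (m : ℕ) (x y : V) (N : ℕ) : Prop :=
  ∃ P : Fin N → (ℕ → V),
    (∀ a, PathSeq G m (P a) ∧ P a 0 = x ∧ P a m = y) ∧
    (∀ a b, a ≠ b → ∃ i, i ≤ m ∧ P a i ≠ P b i) ∧
    ∀ a b, a ≠ b → ∀ i j, 0 < i → i < m → 0 < j → j < m → P a i ≠ P b j

/-- A pair `(x, y)` of distinct vertices is `(i,j)`-rich (with parameters `k`, `h`, `K`, `δ`). -/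
def Rich (G : SimpleGraph V) (k h : ℕ) (K δ : ℝ) (i j : ℕ) (x y : V) : Prop :=
  x ≠ y ∧
  ((2 * (i + j) * h * (2 * k + 1) + 2 * (i + 1) * j : ℕ) : ℝ) *
      (K * δ) ^ ((i : ℤ) + (j : ℤ) - 1) <
    (Set.ncard {PQ : (ℕ → V) × (ℕ → V) |
      PathSeq G i PQ.1 ∧ PQ.1 0 = x ∧ PadSeq i PQ.1 ∧
      PathSeq G j PQ.2 ∧ PQ.2 0 = y ∧ PadSeq j PQ.2 ∧
      ManyDisjointPaths G (2 * k - i - j) (PQ.1 i) (PQ.2 j) ((h + 2) * (2 * k + 1) + 1)} : ℝ)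

/-- `(x, y)` is an `(ℓ, L)`-bad pair: there is an `L`-admissible but not `L`-good path of
length `ℓ` from `x` to `y`. -/
def Bad (G : SimpleGraph V) (L : ℝ) (ℓ : ℕ) (x y : V) : Prop :=
  ∃ p : ℕ → V, p 0 = x ∧ p ℓ = y ∧ Admissible G L ℓ p ∧ ¬ Good G L ℓ p

/-- `G` contains the `(s-1)`-subdivision of the multigraph on `Fin t` with multiplicity
function `m` as a subgraph: each parallel edge between `a < b` is replaced by a path of
length `s`, these paths being pairwise internally vertex-disjoint, with internal vertices
distinct from all branch vertices. -/
def ContainsMultiSubdiv (G : SimpleGraph V) (t : ℕ) (m : Fin t → Fin t → ℕ) (s : ℕ) : Prop :=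
  ∃ (φ : Fin t → V) (π : (a : Fin t) → (b : Fin t) → Fin (m a b) → (ℕ → V)),
    Function.Injective φ ∧
    (∀ a b, a < b → ∀ c, PathSeq G s (π a b c) ∧ π a b c 0 = φ a ∧ π a b c s = φ b) ∧
    (∀ a b, a < b → ∀ c, ∀ i, 0 < i → i < s → ∀ d, π a b c i ≠ φ d) ∧
    (∀ a b, a < b → ∀ a' b', a' < b' → ∀ (c : Fin (m a b)) (c' : Fin (m a' b')),
      (a, b, (c : ℕ)) ≠ (a', b', (c' : ℕ)) →
      ∀ i i', 0 < i → i < s → 0 < i' → i' < s → π a b c i ≠ π a' b' c' i')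

/-- The number of vertices of `H = F^{2k-1}` where `F` is the multigraph on `Fin t` with
multiplicity function `m`: the `t` branch vertices plus `2k - 1` internal vertices for each
edge (counted with multiplicity). -/
def nH (t k : ℕ) (m : Fin t → Fin t → ℕ) : ℕ :=
  t + (2 * k - 1) * ∑ p : Fin t × Fin t, if p.1 < p.2 then m p.1 p.2 else 0

/-- The minimum degree of `G`. -/
noncomputable def minDeg (G : SimpleGraph V) : ℕ :=
  sInf {d | ∃ v, (G.neighborSet v).ncard = d}

/-- The maximum degree of `G`. -/
noncomputable def maxDeg (G : SimpleGraph V) : ℕ :=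
  sSup {d | ∃ v, (G.neighborSet v).ncard = d}

/-- Adjacency in the auxiliary graph `𝒢_ℓ(v)`: the `2k+1` vertices `u 0 = v, u 1, …, u k,
u' 1, …, u' k` are all distinct and there exist `0 ≤ i, j ≤ k-1` such that the pair
`(u ℓ, u' ℓ)` is `(i,j)`-rich (symmetrised so that this defines a graph). -/
def AuxAdj (G : SimpleGraph V) (k h : ℕ) (K δ : ℝ) (ℓ : Fin (k + 1))
    (u u' : Fin (k + 1) → V) : Prop :=
  Function.Injective u ∧ Function.Injective u' ∧
  (∀ a b : Fin (k + 1), a ≠ 0 → b ≠ 0 → u a ≠ u' b) ∧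
  ∃ i j : ℕ, i < k ∧ j < k ∧
    (Rich G k h K δ i j (u ℓ) (u' ℓ) ∨ Rich G k h K δ i j (u' ℓ) (u ℓ))

/-- `r` satisfies the `k`-colour Ramsey property for `t`: every `k`-colouring of the edges of
the complete graph on `r` vertices contains a monochromatic complete graph on `t` vertices. -/
def RamseyProp (k t r : ℕ) : Prop :=
  ∀ χ : Fin r → Fin r → Fin k, (∀ a b, χ a b = χ b a) →
    ∃ (col : Fin k) (s : Finset (Fin r)), s.card = t ∧
      ∀ a ∈ s, ∀ b ∈ s, a ≠ b → χ a b = col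

/-! ### Sequences and counting -/

set_option linter.unusedSectionVars false

/-- The sequence `f` frozen after index `j`, i.e. padded to length `j`. -/
def trunc (j : ℕ) (f : ℕ → V) : ℕ → V := fun i => f (min i j)

/-- The sequence `f` with its first `i` terms removed. -/
def shiftSeq (i : ℕ) (f : ℕ → V) : ℕ → V := fun a => f (i + a)

lemma trunc_apply {j i : ℕ} (f : ℕ → V) (h : i ≤ j) : trunc j f i = f i := by
  simp [trunc, h]

lemma padSeq_trunc (j : ℕ) (f : ℕ → V) : PadSeq j (trunc j f) := by
  intro i hi
  simp [trunc, hi]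

lemma trunc_eq_self {j : ℕ} {f : ℕ → V} (h : PadSeq j f) : trunc j f = f := by
  funext i
  rcases le_total i j with hi | hi
  · simp [trunc, hi]
  · simp [trunc, hi, h i hi]

lemma PadSeq.ext {j : ℕ} {f g : ℕ → V} (hf : PadSeq j f) (hg : PadSeq j g)
    (h : ∀ i ≤ j, f i = g i) : f = g := by
  rw [← trunc_eq_self hf, ← trunc_eq_self hg]
  funext i
  exact h _ (min_le_right _ _)

lemma PadSeq.shift {i j : ℕ} {f : ℕ → V} (h : PadSeq (i + j) f) : PadSeq j (shiftSeq i f) := by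
  intro a ha
  exact h _ (by omega)

lemma finite_padSeq (j : ℕ) : {q : ℕ → V | PadSeq j q}.Finite := by
  refine Set.Finite.of_injOn (f := fun q : ℕ → V => fun i : Fin (j + 1) => q i) (t := Set.univ)
    (fun _ _ => trivial) ?_ Set.finite_univ
  intro f hf g hg h
  refine PadSeq.ext hf hg fun i hi => ?_
  exact congrFun h ⟨i, by omega⟩

lemma PathSeq.sub {G : SimpleGraph V} {ℓ i j : ℕ} {p : ℕ → V} (h : PathSeq G ℓ p)
    (hij : i + j ≤ ℓ) : PathSeq G j (shiftSeq i p) := by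
  refine ⟨fun a ha => ?_, fun a b hab hb => ?_⟩
  · exact h.1 (i + a) (by omega)
  · exact h.2 (i + a) (i + b) (by omega) (by omega)

lemma PathSeq.congr {G : SimpleGraph V} {ℓ : ℕ} {p p' : ℕ → V} (h : PathSeq G ℓ p)
    (hp : ∀ i ≤ ℓ, p i = p' i) : PathSeq G ℓ p' := by
  refine ⟨fun a ha => ?_, fun a b hab hb => ?_⟩
  · rw [← hp a (by omega), ← hp (a + 1) (by omega)]; exact h.1 a ha
  · rw [← hp a (by omega), ← hp b (by omega)]; exact h.2 a b hab hb

lemma good_iff {G : SimpleGraph V} {L : ℝ} {ℓ : ℕ} {p : ℕ → V} :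
    Good G L ℓ p ↔ Admissible G L ℓ p ∧
      (Set.ncard {q : ℕ → V | q 0 = p 0 ∧ q ℓ = p ℓ ∧ PadSeq ℓ q ∧ Admissible G L ℓ q} : ℝ)
        ≤ fBound ℓ L := by
  rw [Good]; rfl

lemma good_congr {G : SimpleGraph V} {L : ℝ} {ℓ : ℕ} {p p' : ℕ → V}
    (hp : ∀ i ≤ ℓ, p i = p' i) (h : Good G L ℓ p) : Good G L ℓ p' := by
  induction ℓ using Nat.strong_induction_on generalizing p p' with
  | _ ℓ ih =>
    rw [good_iff] at h ⊢
    rw [← hp 0 (by omega), ← hp ℓ le_rfl]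
    refine ⟨⟨h.1.1.congr hp, fun i j hij hj hne => ?_⟩, h.2⟩
    exact ih (j - i) (by omega) (fun a ha => hp _ (by omega)) (h.1.2 i j hij hj hne)

lemma adm_congr {G : SimpleGraph V} {L : ℝ} {ℓ : ℕ} {p p' : ℕ → V}
    (hp : ∀ i ≤ ℓ, p i = p' i) (h : Admissible G L ℓ p) : Admissible G L ℓ p' :=
  ⟨h.1.congr hp, fun i j hij hj hne =>
    good_congr (fun a ha => hp _ (by omega)) (h.2 i j hij hj hne)⟩

lemma Admissible.good_sub {G : SimpleGraph V} {L : ℝ} {ℓ i j : ℕ} {p : ℕ → V}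
    (h : Admissible G L ℓ p) (hj : 0 < j) (hij : i + j ≤ ℓ) (hlt : j < ℓ) :
    Good G L j (shiftSeq i p) := by
  have := h.2 i (i + j) (by omega) hij (by omega)
  rwa [Nat.add_sub_cancel_left] at this

/-- A path that fails to be good contains a shortest subpath that fails to be good, and such a
subpath is admissible. -/
lemma exists_bad_sub {G : SimpleGraph V} {L : ℝ} {ℓ : ℕ} {p : ℕ → V} (hℓ : 0 < ℓ)
    (hp : PathSeq G ℓ p) (h : ¬ Good G L ℓ p) :
    ∃ i l, 0 < l ∧ i + l ≤ ℓ ∧ Admissible G L l (shiftSeq i p) ∧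
      ¬ Good G L l (shiftSeq i p) := by
  induction ℓ using Nat.strong_induction_on generalizing p with
  | _ ℓ ih =>
    by_cases ha : Admissible G L ℓ p
    · refine ⟨0, ℓ, hℓ, by omega, ?_, ?_⟩
      · exact adm_congr (fun i _ => by simp [shiftSeq]) ha
      · exact fun hg => h (good_congr (fun i _ => by simp [shiftSeq]) hg)
    · have : ∃ i j, i < j ∧ j ≤ ℓ ∧ ¬(i = 0 ∧ j = ℓ) ∧ ¬ Good G L (j - i) (shiftSeq i p) := by
        by_contra hcon
        push Not at hcon
        exact ha ⟨hp, fun i j hij hj hne => hcon i j hij hj (fun h0 h1 => hne ⟨h0, h1⟩)⟩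
      obtain ⟨i, j, hij, hj, hne, hg⟩ := this
      obtain ⟨i', l, hl, hil, h1, h2⟩ := ih (j - i) (by omega) (by omega)
        (hp.sub (i := i) (j := j - i) (by omega)) hg
      have e : shiftSeq i' (shiftSeq i p) = shiftSeq (i + i') p := by
        funext a; simp [shiftSeq, add_assoc]
      rw [e] at h1 h2
      exact ⟨i + i', l, hl, by omega, h1, h2⟩

/-- Single edges are always good. -/
lemma good_one {G : SimpleGraph V} {L : ℝ} (hL : 1 ≤ L) {p : ℕ → V} (hp : PathSeq G 1 p) :
    Good G L 1 p := by
  rw [good_iff]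
  refine ⟨⟨hp, fun i j hij hj hne => by omega⟩, ?_⟩
  have : Set.ncard {q : ℕ → V | q 0 = p 0 ∧ q 1 = p 1 ∧ PadSeq 1 q ∧ Admissible G L 1 q} ≤ 1 := by
    rw [Set.ncard_le_one ((finite_padSeq 1).subset fun q hq => hq.2.2.1)]
    intro a ha b hb
    refine PadSeq.ext ha.2.2.1 hb.2.2.1 fun i hi => ?_
    interval_cases i
    · rw [ha.1, hb.1]
    · rw [ha.2.1, hb.2.1]
  calc _ ≤ (1 : ℝ) := by exact_mod_cast this
    _ ≤ _ := one_le_pow₀ hL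

/-- Fibrewise counting: a map all of whose fibres have at most `d` elements. -/
lemma ncard_le_mul_fiber {α β : Type*} {A : Set α} (hA : A.Finite) (φ : α → β) {B : Set β}
    (hB : B.Finite) (h : ∀ a ∈ A, φ a ∈ B) (d : ℝ)
    (hd : ∀ b ∈ B, (({a ∈ A | φ a = b}).ncard : ℝ) ≤ d) :
    (A.ncard : ℝ) ≤ d * B.ncard := by
  classical
  rw [Set.ncard_eq_toFinset_card A hA, Set.ncard_eq_toFinset_card B hB]
  rw [Finset.card_eq_sum_card_fiberwise (f := φ) (t := hB.toFinset)
    (fun a ha => by simpa using h a (by simpa using ha))]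
  push_cast
  rw [mul_comm, ← nsmul_eq_mul]
  refine Finset.sum_le_card_nsmul _ _ _ fun b hb => ?_
  refine le_trans (le_of_eq ?_) (hd b (by simpa using hb))
  rw [← Set.ncard_coe_finset]
  congr 2
  ext a; simp

/-- Building sequences step by step: if the term after position `i` has at most `d i` possible
values once the terms up to position `i` are known, the number of sequences is at most the
product of the `d i`, times the number of initial segments. -/
lemma step_count {A : Set (ℕ → V)} {i₀ j : ℕ} (hij : i₀ ≤ j) (hpad : ∀ q ∈ A, PadSeq j q)
    (c : ℕ → (ℕ → V) → Set V) (d : ℕ → ℕ)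
    (hc : ∀ q ∈ A, ∀ i, i₀ ≤ i → i < j → q (i + 1) ∈ c i (trunc i q))
    (hd : ∀ i f, i₀ ≤ i → i < j → (c i f).ncard ≤ d i) :
    A.ncard ≤ (∏ i ∈ Finset.Ico i₀ j, d i) * (trunc i₀ '' A).ncard := by
  induction j, hij using Nat.le_induction generalizing A with
  | base =>
    have : trunc i₀ '' A = A := by
      ext q; constructor
      · rintro ⟨q, hq, rfl⟩; rwa [trunc_eq_self (hpad q hq)]
      · exact fun hq => ⟨q, hq, trunc_eq_self (hpad q hq)⟩
    simp [this]
  | succ j hij ih =>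
    have hAf : A.Finite := (finite_padSeq (j + 1)).subset hpad
    have h1 : (A.ncard : ℝ) ≤ (d j : ℝ) * (trunc j '' A).ncard := by
      refine ncard_le_mul_fiber hAf (trunc j) (hAf.image _) (fun a ha => ⟨a, ha, rfl⟩) _ ?_
      intro b _
      refine Nat.cast_le.2 (le_trans ?_ (hd j b hij (by omega)))
      refine Set.ncard_le_ncard_of_injOn (fun q => q (j + 1)) ?_ ?_ (Set.toFinite _)
      · rintro q ⟨hq, rfl⟩; exact hc q hq j hij (by omega)
      · rintro q ⟨hq, hqb⟩ q' ⟨hq', hqb'⟩ he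
        refine PadSeq.ext (hpad q hq) (hpad q' hq') fun i hi => ?_
        rcases Nat.lt_or_ge j i with h | h
        · obtain rfl : i = j + 1 := by omega
          exact he
        · rw [← trunc_apply q h, ← trunc_apply q' h, hqb, hqb']
    have h2 := ih (A := trunc j '' A) (by rintro _ ⟨q, _, rfl⟩; exact padSeq_trunc j q)
      (by
        rintro _ ⟨q, hq, rfl⟩ i hi hij'
        have e : trunc i (trunc j q) = trunc i q := by
          funext a; simp only [trunc]; congr 1; omega
        rw [e, trunc_apply q (by omega)]
        exact hc q hq i hi (by omega)) (fun i f h h' => hd i f h (by omega))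
    have e : trunc i₀ '' (trunc j '' A) = trunc i₀ '' A := by
      rw [Set.image_image]
      refine Set.image_congr' fun q => ?_
      funext a; simp only [trunc]; congr 1; omega
    rw [e] at h2
    rw [Finset.prod_Ico_succ_top hij]
    have h1' : A.ncard ≤ d j * (trunc j '' A).ncard := by exact_mod_cast h1
    calc A.ncard ≤ d j * (trunc j '' A).ncard := h1'
      _ ≤ d j * _ := Nat.mul_le_mul_left _ h2
      _ = _ := by ring

/-- The terms `p 0, …, p j` form a walk of length `j`; vertices may repeat. -/
def WalkSeq (G : SimpleGraph V) (j : ℕ) (p : ℕ → V) : Prop := ∀ i < j, G.Adj (p i) (p (i + 1))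

lemma image_trunc_zero_ncard {A : Set (ℕ → V)} {a : V} (h : ∀ q ∈ A, q 0 = a) :
    (trunc 0 '' A).ncard ≤ 1 := by
  refine (Set.ncard_le_ncard (t := {fun _ => a}) ?_ (Set.finite_singleton _)).trans (by simp)
  rintro _ ⟨q, hq, rfl⟩
  simp only [Set.mem_singleton_iff]
  funext i; simp [trunc, h q hq]

lemma walk_count {G : SimpleGraph V} {D : ℕ} (hD : ∀ v, (G.neighborSet v).ncard ≤ D) (j : ℕ)
    (a : V) : {q : ℕ → V | PadSeq j q ∧ WalkSeq G j q ∧ q 0 = a}.ncard ≤ D ^ j := by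
  have h := step_count (A := {q : ℕ → V | PadSeq j q ∧ WalkSeq G j q ∧ q 0 = a}) (i₀ := 0)
    (Nat.zero_le j) (fun q hq => hq.1) (fun i f => G.neighborSet (f i)) (fun _ => D)
    (fun q hq i _ hi => by rw [trunc_apply q le_rfl]; exact hq.2.1 i hi) (fun i f _ _ => hD _)
  refine h.trans ?_
  have := image_trunc_zero_ncard (A := {q : ℕ → V | PadSeq j q ∧ WalkSeq G j q ∧ q 0 = a})
    (fun q hq => hq.2.2)
  simpa using Nat.mul_le_mul_left (D ^ j) this

/-- Prescribing that one non-initial vertex lies in a set of size `σ`, which may depend on an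
earlier vertex, saves a factor `D / σ` in the count of walks. -/
lemma walk_count_through {G : SimpleGraph V} {D : ℕ} (hD : ∀ v, (G.neighborSet v).ncard ≤ D)
    {j i e σ : ℕ} (a : V) (S : V → Set V) (hS : ∀ v, (S v).ncard ≤ σ) (hei : e ≤ i) (hij : i < j) :
    {q : ℕ → V | PadSeq j q ∧ WalkSeq G j q ∧ q 0 = a ∧ q (i + 1) ∈ S (q e)}.ncard
      ≤ σ * D ^ (j - 1) := by
  set A := {q : ℕ → V | PadSeq j q ∧ WalkSeq G j q ∧ q 0 = a ∧ q (i + 1) ∈ S (q e)} with hA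
  have h := step_count (A := A) (i₀ := 0)
    (Nat.zero_le j) (fun q hq => hq.1)
    (fun i' f => if i' = i then S (f e) else G.neighborSet (f i'))
    (fun i' => if i' = i then σ else D)
    (fun q hq i' _ hi => by
      split_ifs with h
      · subst h; rw [trunc_apply q hei]; exact hq.2.2.2
      · rw [trunc_apply q le_rfl]; exact hq.2.1 i' hi)
    (fun i' f _ _ => by split_ifs; exacts [hS _, hD _])
  refine h.trans ?_
  have h1 := image_trunc_zero_ncard (A := A) (fun q hq => hq.2.2.1)
  have h2 : (∏ i' ∈ Finset.Ico 0 j, if i' = i then σ else D) = σ * D ^ (j - 1) := by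
    rw [← Finset.mul_prod_erase _ _ (a := i) (by simp [hij])]
    rw [if_pos rfl]
    congr 1
    rw [Finset.prod_congr rfl (g := fun _ => D)
      (fun x hx => if_neg (Finset.ne_of_mem_erase hx))]
    simp [Finset.card_erase_of_mem, hij]
  rw [h2]
  simpa using Nat.mul_le_mul_left (σ * D ^ (j - 1)) h1

/-! ### Robust connections -/

/-- `x` and `y` are robustly joined by paths of length `j`: whenever `S` is a set of vertices
with `|S| + j ≤ M` that avoids `x ≠ y`, some path of length `j` from `x` to `y` avoids `S`.
Measuring the size of `S` together with the length makes the budget `M` stable under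
concatenation. -/
def Rob (G : SimpleGraph V) (M j : ℕ) (x y : V) : Prop :=
  ∀ S : Finset V, S.card + j ≤ M → x ∉ S → y ∉ S → x ≠ y →
    ∃ p, PathSeq G j p ∧ p 0 = x ∧ p j = y ∧ ∀ i ≤ j, p i ∉ S

lemma PathSeq.reverse {G : SimpleGraph V} {j : ℕ} {p : ℕ → V} (h : PathSeq G j p) :
    PathSeq G j (fun i => p (j - i)) := by
  refine ⟨fun i hi => ?_, fun a b hab hb => ?_⟩
  · have := h.1 (j - (i + 1)) (by omega)
    rw [show j - (i + 1) + 1 = j - i by omega] at this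
    exact this.symm
  · exact (h.2 (j - b) (j - a) (by omega) (by omega)).symm

lemma Rob.symm {G : SimpleGraph V} {M j : ℕ} {x y : V} (h : Rob G M j x y) : Rob G M j y x := by
  intro S hS hy hx hne
  obtain ⟨p, hp, h0, hj, hav⟩ := h S hS hx hy hne.symm
  exact ⟨_, hp.reverse, by simpa using hj, by simpa using h0, fun i _ => hav _ (by omega)⟩

lemma PathSeq.append {G : SimpleGraph V} {i j : ℕ} {p q : ℕ → V} (hp : PathSeq G i p)
    (hq : PathSeq G j q) (hpq : p i = q 0) (hd : ∀ a < i, ∀ b ≤ j, p a ≠ q b) :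
    PathSeq G (i + j) (fun a => if a ≤ i then p a else q (a - i)) := by
  refine ⟨fun a ha => ?_, fun a b hab hb => ?_⟩
  · dsimp only
    rcases lt_trichotomy a i with h | h | h
    · rw [if_pos (by omega), if_pos (by omega)]; exact hp.1 a h
    · subst h
      rw [if_pos le_rfl, if_neg (by omega), hpq, Nat.add_sub_cancel_left]
      exact hq.1 0 (by omega)
    · rw [if_neg (by omega), if_neg (by omega), show a + 1 - i = a - i + 1 by omega]
      exact hq.1 _ (by omega)
  · dsimp only
    by_cases hbi : b ≤ i
    · rw [if_pos (by omega), if_pos hbi]; exact hp.2 a b hab hbi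
    · rw [if_neg hbi]
      split_ifs with hai
      · rcases Nat.lt_or_ge a i with h | h
        · exact hd a h _ (by omega)
        · obtain rfl : a = i := by omega
          rw [hpq]; exact hq.2 0 _ (by omega) (by omega)
      · exact hq.2 _ _ (by omega) (by omega)

/-- Robust connections compose through a large set of possible midpoints. -/
lemma Rob.trans {G : SimpleGraph V} {M i j : ℕ} {x y : V} (hi : 0 < i) (hj : 0 < j)
    (Z : Finset V) (hZ : M < Z.card) (hx : ∀ z ∈ Z, Rob G M i x z)
    (hy : ∀ z ∈ Z, Rob G M j z y) : Rob G M (i + j) x y := by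
  intro S hS hxS hyS hxy
  obtain ⟨z, hz, hzS⟩ : ∃ z ∈ Z, z ∉ insert x (insert y S) := by
    apply Finset.exists_mem_notMem_of_card_lt_card
    have h1 := Finset.card_insert_le x (insert y S)
    have h2 := Finset.card_insert_le y S
    omega
  simp only [Finset.mem_insert, not_or] at hzS
  obtain ⟨p, hp, hp0, hpi, hpS⟩ := hx z hz (insert y S)
    (by have := Finset.card_insert_le y S; omega)
    (by simp [hxy, hxS]) (by simp [hzS.2.1, hzS.2.2]) (Ne.symm hzS.1)
  obtain ⟨q, hq, hq0, hqj, hqS⟩ := hy z hz (S ∪ (Finset.range i).image p)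
    (by
      have h1 := Finset.card_union_le S ((Finset.range i).image p)
      have h2 := Finset.card_image_le (s := Finset.range i) (f := p)
      simp only [Finset.card_range] at h2
      omega)
    (by
      simp only [Finset.mem_union, Finset.mem_image, Finset.mem_range, not_or, not_exists, not_and]
      exact ⟨hzS.2.2, fun a ha he => hp.2 a i ha le_rfl (he.trans hpi.symm)⟩)
    (by
      simp only [Finset.mem_union, Finset.mem_image, Finset.mem_range, not_or, not_exists, not_and]
      exact ⟨hyS, fun a ha he => hpS a ha.le (by simp [he])⟩) hzS.2.1
  refine ⟨_, hp.append hq (by rw [hpi, hq0]) (fun a ha b hb he => hqS b hb ?_), ?_, ?_, ?_⟩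
  · rw [← he]
    exact Finset.mem_union_right _ (Finset.mem_image_of_mem _ (Finset.mem_range.2 ha))
  · simpa using hp0
  · rw [if_neg (by omega), Nat.add_sub_cancel_left, hqj]
  · intro a ha
    split_ifs with h
    · exact fun hm => hpS a h (Finset.mem_insert_of_mem hm)
    · exact fun hm => hqS _ (by omega) (Finset.mem_union_left _ hm)

/-- If disjoint paths of length `r` lead from `w` to many vertices robustly joined to `y`, then
`w` itself is robustly joined to `y`. -/
lemma rob_of_disjoint {G : SimpleGraph V} {M r ℓ N : ℕ} {w y : V} (hr : 0 < r) (hℓ : 0 < ℓ)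
    (Q : Fin N → ℕ → V) (I : Finset (Fin N)) (hI : M < I.card)
    (hQ : ∀ i, PathSeq G r (Q i)) (hQ0 : ∀ i, Q i 0 = w)
    (hdis : ∀ i i', i ≠ i' → ∀ a b, 0 < a → a ≤ r → 0 < b → b ≤ r → Q i a ≠ Q i' b)
    (hrob : ∀ i ∈ I, Rob G M ℓ (Q i r) y) : Rob G M (r + ℓ) w y := by
  intro S hS hwS hyS hwy
  -- each forbidden vertex lies on at most one of the disjoint paths
  obtain ⟨i, hi, hiS⟩ : ∃ i ∈ I, ∀ a, 0 < a → a ≤ r → Q i a ∉ insert y S := by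
    by_contra hcon
    push Not at hcon
    choose! f hf0 hfr hfS using hcon
    have h1 : I.card ≤ (insert y S).card := by
      refine Finset.card_le_card_of_injOn (fun i => Q i (f i)) (fun i hi => hfS i hi) ?_
      intro i hi i' hi' he
      by_contra hne
      exact hdis i i' hne _ _ (hf0 i hi) (hfr i hi) (hf0 i' hi') (hfr i' hi') he
    have h2 := Finset.card_insert_le y S
    omega
  have hir := hiS r hr le_rfl
  obtain ⟨q, hq, hq0, hqj, hqS⟩ := hrob i hi (S ∪ (Finset.range r).image (Q i))
    (by
      have h1 := Finset.card_union_le S ((Finset.range r).image (Q i))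
      have h2 := Finset.card_image_le (s := Finset.range r) (f := Q i)
      simp only [Finset.card_range] at h2
      omega)
    (by
      simp only [Finset.mem_union, Finset.mem_image, Finset.mem_range, not_or, not_exists, not_and]
      exact ⟨fun h => hir (Finset.mem_insert_of_mem h),
        fun a ha he => (hQ i).2 a r ha le_rfl he⟩)
    (by
      simp only [Finset.mem_union, Finset.mem_image, Finset.mem_range, not_or, not_exists, not_and]
      refine ⟨hyS, fun a ha he => ?_⟩
      rcases Nat.eq_zero_or_pos a with h | h
      · subst h; exact hwy (by rw [← he, hQ0])
      · exact hiS a h ha.le (by simp [he]))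
    (fun he => hir (by simp [he]))
  refine ⟨_, (hQ i).append hq hq0.symm (fun a ha b hb he => hqS b hb ?_), ?_, ?_, ?_⟩
  · rw [← he]
    exact Finset.mem_union_right _ (Finset.mem_image_of_mem _ (Finset.mem_range.2 ha))
  · simpa using hQ0 i
  · rw [if_neg (by omega), Nat.add_sub_cancel_left, hqj]
  · intro a ha
    split_ifs with h
    · rcases Nat.eq_zero_or_pos a with h0 | h0
      · subst h0; rwa [hQ0]
      · exact fun hm => hiS a h0 h (Finset.mem_insert_of_mem hm)
    · exact fun hm => hqS _ (by omega) (Finset.mem_union_left _ hm)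

/-- The `L`-admissible paths of length `ℓ` from `x` to `y`, padded. -/
def admSet (G : SimpleGraph V) (L : ℝ) (ℓ : ℕ) (x y : V) : Set (ℕ → V) :=
  {q | q 0 = x ∧ q ℓ = y ∧ PadSeq ℓ q ∧ Admissible G L ℓ q}

lemma admSet_finite (G : SimpleGraph V) (L : ℝ) (ℓ : ℕ) (x y : V) : (admSet G L ℓ x y).Finite :=
  (finite_padSeq ℓ).subset fun _ hq => hq.2.2.1

lemma Good.admSet_le {G : SimpleGraph V} {L : ℝ} {ℓ : ℕ} {p : ℕ → V} (h : Good G L ℓ p) :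
    ((admSet G L ℓ (p 0) (p ℓ)).ncard : ℝ) ≤ fBound ℓ L := (good_iff.1 h).2

lemma lt_admSet {G : SimpleGraph V} {L : ℝ} {ℓ : ℕ} {p : ℕ → V} (ha : Admissible G L ℓ p)
    (h : ¬ Good G L ℓ p) : fBound ℓ L < ((admSet G L ℓ (p 0) (p ℓ)).ncard : ℝ) := by
  by_contra hcon
  exact h (good_iff.2 ⟨ha, not_lt.1 hcon⟩)

/-- Since the two halves of an admissible path are good, few admissible paths between given
ends pass through a given inner vertex at a given position. -/
lemma admSet_through {G : SimpleGraph V} {L : ℝ} (hL : 1 ≤ L) {ℓ i : ℕ} (x y z : V) (hi : 0 < i)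
    (hiℓ : i < ℓ) :
    (({q ∈ admSet G L ℓ x y | q i = z}).ncard : ℝ) ≤ L ^ (2 * 5 ^ (ℓ - 1)) := by
  rcases Set.eq_empty_or_nonempty {q ∈ admSet G L ℓ x y | q i = z} with h | ⟨q₀, hq₀, hz⟩
  · rw [h]; simp; positivity
  have good1 : ∀ q, Admissible G L ℓ q → Good G L i (trunc i q) := fun q hq =>
    good_congr (fun a ha => by simp [shiftSeq, trunc_apply q ha])
      (hq.good_sub (i := 0) (j := i) hi (by omega) hiℓ)
  have good2 : ∀ q, Admissible G L ℓ q → Good G L (ℓ - i) (shiftSeq i q) := fun q hq =>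
    hq.good_sub (i := i) (j := ℓ - i) (by omega) (by omega) (by omega)
  have key : ({q ∈ admSet G L ℓ x y | q i = z}).ncard ≤
      (admSet G L i x z ×ˢ admSet G L (ℓ - i) z y).ncard := by
    refine Set.ncard_le_ncard_of_injOn (fun q => (trunc i q, shiftSeq i q)) ?_ ?_
      ((admSet_finite _ _ _ _ _).prod (admSet_finite _ _ _ _ _))
    · rintro q ⟨⟨h0, hℓ, hpad, hadm⟩, hqz⟩
      refine ⟨⟨?_, ?_, padSeq_trunc _ _, (good_iff.1 (good1 q hadm)).1⟩,
        ⟨?_, ?_, ?_, (good_iff.1 (good2 q hadm)).1⟩⟩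
      · simpa [trunc] using h0
      · simpa [trunc] using hqz
      · simpa [shiftSeq] using hqz
      · simpa [shiftSeq, Nat.add_sub_cancel' hiℓ.le] using hℓ
      · exact PadSeq.shift (by rwa [Nat.add_sub_cancel' hiℓ.le])
    · rintro q ⟨hq, _⟩ q' ⟨hq', _⟩ he
      refine PadSeq.ext hq.2.2.1 hq'.2.2.1 fun a ha => ?_
      simp only [Prod.mk.injEq] at he
      rcases le_total a i with h | h
      · rw [← trunc_apply q h, ← trunc_apply q' h, he.1]
      · have := congrFun he.2 (a - i)
        simpa [shiftSeq, Nat.add_sub_cancel' h] using this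
  have b1 := (good1 q₀ hq₀.2.2.2).admSet_le
  have b2 := (good2 q₀ hq₀.2.2.2).admSet_le
  rw [trunc_apply _ (Nat.zero_le _), trunc_apply _ le_rfl, hq₀.1, hz] at b1
  simp only [shiftSeq, Nat.add_sub_cancel' hiℓ.le, add_zero] at b2
  rw [hz, hq₀.2.1] at b2
  rw [Set.ncard_prod] at key
  calc (({q ∈ admSet G L ℓ x y | q i = z}).ncard : ℝ)
      ≤ (admSet G L i x z).ncard * (admSet G L (ℓ - i) z y).ncard := by exact_mod_cast key
    _ ≤ fBound i L * fBound (ℓ - i) L := by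
        apply mul_le_mul b1 b2 (by positivity); unfold fBound; positivity
    _ = L ^ (5 ^ i + 5 ^ (ℓ - i)) := by rw [fBound, fBound, pow_add]
    _ ≤ L ^ (2 * 5 ^ (ℓ - 1)) := by
        apply pow_le_pow_right₀ hL
        have e1 : 5 ^ i ≤ 5 ^ (ℓ - 1) := Nat.pow_le_pow_right (by norm_num) (by omega)
        have e2 : 5 ^ (ℓ - i) ≤ 5 ^ (ℓ - 1) := Nat.pow_le_pow_right (by norm_num) (by omega)
        omega

/-- The end vertices of an admissible path that is not good are robustly joined. -/
lemma rob_of_bad {G : SimpleGraph V} {L : ℝ} {ℓ M : ℕ} {p : ℕ → V} (hL : 1 ≤ L)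
    (hM : (ℓ : ℝ) * M ≤ L) (hℓ : 0 < ℓ) (ha : Admissible G L ℓ p) (hg : ¬ Good G L ℓ p) :
    Rob G M ℓ (p 0) (p ℓ) := by
  intro S hS hxS hyS _
  by_contra hcon
  push Not at hcon
  have hlt := lt_admSet ha hg
  set A := admSet G L ℓ (p 0) (p ℓ) with hA
  have hAf : A.Finite := admSet_finite _ _ _ _ _
  have hit : ∀ q ∈ A, ∃ b : ℕ × V, b ∈ (Finset.Ioo 0 ℓ ×ˢ S) ∧ q b.1 = b.2 := by
    intro q hq
    obtain ⟨i, hi, hiS⟩ := hcon q hq.2.2.2.1 hq.1 hq.2.1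
    refine ⟨(i, q i), ?_, rfl⟩
    have h0 : i ≠ 0 := by rintro rfl; exact hxS (hq.1 ▸ hiS)
    have h1 : i ≠ ℓ := by rintro rfl; exact hyS (hq.2.1 ▸ hiS)
    simp only [Finset.mem_product, Finset.mem_Ioo]
    exact ⟨⟨by omega, by omega⟩, hiS⟩
  have : Nonempty V := ⟨p 0⟩
  choose! φ hφ hφ' using hit
  have hb := ncard_le_mul_fiber hAf φ (B := ((Finset.Ioo 0 ℓ ×ˢ S : Finset (ℕ × V)) : Set (ℕ × V)))
    (Finset.finite_toSet _) (fun q hq => hφ q hq) (L ^ (2 * 5 ^ (ℓ - 1))) (by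
      rintro ⟨i, z⟩ hb
      have hi : 0 < i ∧ i < ℓ := by
        have := hb; simp only [Finset.coe_product, Set.mem_prod, Finset.mem_coe,
          Finset.mem_Ioo] at this
        exact this.1
      refine le_trans (Nat.cast_le.2 (Set.ncard_le_ncard ?_ (hAf.subset fun q hq => hq.1)))
        (admSet_through hL (p 0) (p ℓ) z hi.1 hi.2)
      rintro q ⟨hq, hqe⟩
      have := hφ' q hq
      rw [show φ q = (i, z) from hqe] at this
      exact ⟨hq, this⟩)
  rw [Set.ncard_coe_finset, Finset.card_product, Nat.card_Ioo] at hb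
  have h1 : (((ℓ - 0 - 1) * S.card : ℕ) : ℝ) ≤ L := by
    refine le_trans ?_ hM
    rw [← Nat.cast_mul]
    exact Nat.cast_le.2 (Nat.mul_le_mul (by omega) (by omega))
  have h2 : (A.ncard : ℝ) ≤ fBound ℓ L := by
    refine hb.trans ((mul_le_mul_of_nonneg_left h1 (by positivity)).trans ?_)
    rw [← pow_succ, fBound]
    apply pow_le_pow_right₀ hL
    have : 5 ^ ℓ = 5 * 5 ^ (ℓ - 1) := by
      rw [← pow_succ', Nat.sub_add_cancel hℓ]
    have h5 : 0 < 5 ^ (ℓ - 1) := by positivity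
    omega
  exact absurd hlt (not_lt.2 h2)

/-! ### Dense bipartite relations and the greedy embedding -/

/-- If every `w ∈ W` is related to at least `d` elements of `Y`, then at least `d / 2` elements
of `Y` are related to at least `s` elements of `W`, provided `W` is large. -/
lemma popular {α β : Type*} (W : Finset α) (Y : Finset β) (R : α → β → Prop)
    (s : ℕ) (d : ℝ) (hW : 0 < W.card) [DecidableRel R]
    (hd : ∀ w ∈ W, d ≤ ((Y.filter (R w)).card : ℝ))
    (hs : (s : ℝ) * Y.card ≤ W.card * d / 2) :
    d / 2 ≤ ((Y.filter fun y => s ≤ (W.filter fun w => R w y).card).card : ℝ) := by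
  set m := W.card with hm
  let deg : β → ℕ := fun y => (W.filter fun w => R w y).card
  have hm0 : (0 : ℝ) < m := by exact_mod_cast hW
  change d / 2 ≤ ((Y.filter fun y => s ≤ deg y).card : ℝ)
  have hsum : (m : ℝ) * d ≤ ∑ y ∈ Y, (deg y : ℝ) := by
    have e : ∑ y ∈ Y, deg y = ∑ w ∈ W, (Y.filter fun y => R w y).card :=
      (Finset.sum_card_bipartiteAbove_eq_sum_card_bipartiteBelow (s := W) (t := Y) R).symm
    have e' : ∑ y ∈ Y, (deg y : ℝ) = ∑ w ∈ W, ((Y.filter fun y => R w y).card : ℝ) := by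
      exact_mod_cast e
    rw [e', ← nsmul_eq_mul]
    exact Finset.card_nsmul_le_sum _ _ _ hd
  have hup : ∑ y ∈ Y, (deg y : ℝ) ≤ s * Y.card + m * (Y.filter fun y => s ≤ deg y).card := by
    have : ∀ y ∈ Y, (deg y : ℝ) ≤ s + if s ≤ deg y then (m : ℝ) else 0 := by
      intro y _
      split_ifs with h
      · have : (deg y : ℝ) ≤ m := Nat.cast_le.2 (Finset.card_filter_le _ _)
        have : (0 : ℝ) ≤ s := Nat.cast_nonneg _
        linarith
      · rw [add_zero]; exact Nat.cast_le.2 (by omega)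
    refine (Finset.sum_le_sum this).trans (le_of_eq ?_)
    rw [Finset.sum_add_distrib, Finset.sum_const, ← Finset.sum_filter, Finset.sum_const,
      nsmul_eq_mul, nsmul_eq_mul]
    ring
  have : (m : ℝ) * (d / 2) ≤ m * (Y.filter fun y => s ≤ deg y).card := by linarith
  exact le_of_mul_le_mul_left this hm0

/-- An asymmetric Kővári–Sós–Turán count. The side `W` only needs to be a little larger than `s`
times the reciprocal of the density; some `s`-subset of `W` then has many common neighbours in
`Y`. -/
lemma kst {α β : Type*} [DecidableEq α] (W : Finset α) (Y : Finset β) (R : α → β → Prop)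
    (s : ℕ) (d : ℝ) (hW : 0 < W.card)
    (hd : ∀ w ∈ W, d ≤ (({y | y ∈ Y ∧ R w y} : Set β).ncard : ℝ))
    (hs : (s : ℝ) * Y.card ≤ W.card * d / 2) (hsW : s ≤ W.card) :
    ∃ A ⊆ W, A.card = s ∧
      d / 2 ≤ (W.card : ℝ) ^ s * (({y | y ∈ Y ∧ ∀ a ∈ A, R a y} : Set β).ncard : ℝ) := by
  classical
  have hset : ∀ P : β → Prop, ({y | y ∈ Y ∧ P y} : Set β).ncard = (Y.filter P).card := by
    intro P
    rw [← Set.ncard_coe_finset]; congr 1; ext y; simp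
  simp only [hset] at hd ⊢
  set m := W.card with hm
  let deg : β → ℕ := fun y => (W.filter fun w => R w y).card
  have hm0 : (0 : ℝ) < m := by exact_mod_cast hW
  have h1 : d / 2 ≤ ((Y.filter fun y => s ≤ deg y).card : ℝ) := popular W Y R s d hW hd hs
  -- pigeonhole over the `s`-subsets of `W`
  have h2 : ∀ y ∈ Y.filter fun y => s ≤ deg y, ∃ A ∈ W.powersetCard s, ∀ a ∈ A, R a y := by
    intro y hy
    obtain ⟨A, hA, hc⟩ := Finset.exists_subset_card_eq (Finset.mem_filter.1 hy).2
    refine ⟨A, Finset.mem_powersetCard.2 ⟨hA.trans (Finset.filter_subset _ _), hc⟩, fun a ha => ?_⟩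
    exact (Finset.mem_filter.1 (hA ha)).2
  choose! f hf hf' using h2
  have hne : (W.powersetCard s).Nonempty := Finset.powersetCard_nonempty.2 hsW
  obtain ⟨A, hA, hmax⟩ := Finset.exists_max_image (W.powersetCard s)
    (fun A => (Y.filter fun y => ∀ a ∈ A, R a y).card) hne
  obtain ⟨hAW, hAs⟩ := Finset.mem_powersetCard.1 hA
  refine ⟨A, hAW, hAs, h1.trans ?_⟩
  have h3 : (Y.filter fun y => s ≤ deg y).card ≤
      (Y.filter fun y => ∀ a ∈ A, R a y).card * (W.powersetCard s).card := by
    refine Finset.card_le_mul_card_image_of_maps_to hf _ fun B hB => ?_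
    refine le_trans (Finset.card_le_card fun y hy => ?_) (hmax B hB)
    have h := Finset.mem_filter.1 hy
    refine Finset.mem_filter.2 ⟨(Finset.mem_filter.1 h.1).1, ?_⟩
    rw [← h.2]; exact hf' y h.1
  rw [Finset.card_powersetCard] at h3
  have h4 : m.choose s ≤ m ^ s := Nat.choose_le_pow _ _
  calc ((Y.filter fun y => s ≤ deg y).card : ℝ)
      ≤ ((Y.filter fun y => ∀ a ∈ A, R a y).card * m ^ s : ℕ) :=
        Nat.cast_le.2 (h3.trans (Nat.mul_le_mul_left _ h4))
    _ = _ := by push_cast; rw [mul_comm]; congr!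

/-- Robust connections can be realised simultaneously by internally disjoint paths: choose them
one at a time, avoiding everything chosen so far. -/
lemma greedy_paths {G : SimpleGraph V} {M j : ℕ} {ι : Type*} [DecidableEq ι] (I : Finset ι)
    (src dst : ι → V) (Z : Finset V) (hsrc : ∀ e ∈ I, src e ∈ Z) (hdst : ∀ e ∈ I, dst e ∈ Z)
    (hne : ∀ e ∈ I, src e ≠ dst e) (hrob : ∀ e ∈ I, Rob G M j (src e) (dst e))
    (hM : Z.card + (j - 1) * I.card + j ≤ M) :
    ∃ π : ι → ℕ → V, (∀ e ∈ I, PathSeq G j (π e) ∧ π e 0 = src e ∧ π e j = dst e) ∧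
      (∀ e ∈ I, ∀ i, 0 < i → i < j → π e i ∉ Z) ∧
      (∀ e ∈ I, ∀ e' ∈ I, e ≠ e' → ∀ i i', 0 < i → i < j → 0 < i' → i' < j →
        π e i ≠ π e' i') := by
  induction I using Finset.induction_on with
  | empty => exact ⟨fun e _ => src e, by simp, by simp, by simp⟩
  | insert e₀ I he₀ ih =>
    rw [Finset.card_insert_of_notMem he₀, mul_add, mul_one] at hM
    obtain ⟨π, h1, h2, h3⟩ := ih (fun e he => hsrc e (Finset.mem_insert_of_mem he))
      (fun e he => hdst e (Finset.mem_insert_of_mem he))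
      (fun e he => hne e (Finset.mem_insert_of_mem he))
      (fun e he => hrob e (Finset.mem_insert_of_mem he)) (by omega)
    set T : Finset V := I.biUnion fun e => (Finset.Ioo 0 j).image (π e) with hT
    have hTm : ∀ v, v ∈ T ↔ ∃ e ∈ I, ∃ i, (0 < i ∧ i < j) ∧ π e i = v := by
      intro v; simp [hT]
    have hTc : T.card ≤ I.card * (j - 1) := by
      refine Finset.card_biUnion_le_card_mul _ _ _ fun e _ => ?_
      refine Finset.card_image_le.trans ?_
      simp
    have hZT : ∀ v ∈ Z, v ∉ T := by
      intro v hv hvT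
      obtain ⟨e, he, i, hi, rfl⟩ := (hTm v).1 hvT
      exact h2 e he i hi.1 hi.2 hv
    have hs := hsrc e₀ (Finset.mem_insert_self _ _)
    have hd := hdst e₀ (Finset.mem_insert_self _ _)
    obtain ⟨p, hp, hp0, hpj, hpS⟩ := hrob e₀ (Finset.mem_insert_self _ _)
      (((Z.erase (src e₀)).erase (dst e₀)) ∪ T)
      (by
        have a1 := Finset.card_union_le ((Z.erase (src e₀)).erase (dst e₀)) T
        have a2 := Finset.card_erase_le (s := Z.erase (src e₀)) (a := dst e₀)
        have a3 := Finset.card_erase_le (s := Z) (a := src e₀)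
        have : I.card * (j - 1) = (j - 1) * I.card := mul_comm _ _
        omega)
      (by simp [hZT _ hs]) (by simp [hZT _ hd]) (hne e₀ (Finset.mem_insert_self _ _))
    have hpZ : ∀ i, 0 < i → i < j → p i ∉ Z := by
      intro i hi hij hiZ
      apply hpS i hij.le
      refine Finset.mem_union_left _ (Finset.mem_erase.2 ⟨?_, Finset.mem_erase.2 ⟨?_, hiZ⟩⟩)
      · rw [← hpj]; exact hp.2 i j hij le_rfl
      · rw [← hp0]; exact (hp.2 0 i hi hij.le).symm
    have hpT : ∀ e ∈ I, ∀ i i', 0 < i → i < j → 0 < i' → i' < j → p i ≠ π e i' := by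
      intro e he i i' hi hij hi' hij' heq
      exact hpS i hij.le (Finset.mem_union_right _ ((hTm _).2 ⟨e, he, i', ⟨hi', hij'⟩, heq.symm⟩))
    have hoff : ∀ e ∈ I, Function.update π e₀ p e = π e := fun e he =>
      Function.update_of_ne (by rintro rfl; exact he₀ he) _ _
    refine ⟨Function.update π e₀ p, ?_, ?_, ?_⟩
    · intro e he
      rcases Finset.mem_insert.1 he with rfl | he
      · rw [Function.update_self]; exact ⟨hp, hp0, hpj⟩
      · rw [hoff e he]; exact h1 e he
    · intro e he
      rcases Finset.mem_insert.1 he with rfl | he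
      · rw [Function.update_self]; exact hpZ
      · rw [hoff e he]; exact h2 e he
    · intro e he e' he' hee i i' hi hij hi' hij'
      rcases Finset.mem_insert.1 he with h | he <;> rcases Finset.mem_insert.1 he' with h' | he'
      · exact absurd (h.trans h'.symm) hee
      · rw [h, Function.update_self, hoff e' he']; exact hpT e' he' i i' hi hij hi' hij'
      · rw [h', Function.update_self, hoff e he]; exact (hpT e he i' i hi' hij' hi hij).symm
      · rw [hoff e he, hoff e' he']; exact h3 e he e' he' hee i i' hi hij hi' hij'

/-- Pairwise robustly joined branch vertices yield the subdivision. -/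
lemma contains_of_rob {G : SimpleGraph V} {t k : ℕ} (m : Fin t → Fin t → ℕ)
    (A : Finset V) (hA : t ≤ A.card)
    (hrob : ∀ a ∈ A, ∀ b ∈ A, a ≠ b → Rob G (nH t k m + 2 * k) (2 * k) a b) :
    ContainsMultiSubdiv G t m (2 * k) := by
  classical
  obtain ⟨A', hA', hcard⟩ := Finset.exists_subset_card_eq hA
  let φ : Fin t → V := fun i => (A'.equivFinOfCardEq hcard).symm i
  have hφ : Function.Injective φ := fun i j h => by
    simpa [φ, Subtype.ext_iff] using h
  have hφA : ∀ i, φ i ∈ A := fun i => hA' ((A'.equivFinOfCardEq hcard).symm i).2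
  let ι := (p : Fin t × Fin t) × Fin (if p.1 < p.2 then m p.1 p.2 else 0)
  have hι : ∀ e : ι, e.1.1 < e.1.2 := by
    rintro ⟨p, c⟩
    by_contra h
    have hc : (c : ℕ) < if p.1 < p.2 then m p.1 p.2 else 0 := c.2
    split_ifs at hc
    · contradiction
    · omega
  have hcardι : Fintype.card ι = ∑ p : Fin t × Fin t, if p.1 < p.2 then m p.1 p.2 else 0 := by
    simp [ι, Fintype.card_sigma]
  obtain ⟨π, h1, h2, h3⟩ := greedy_paths (G := G) (M := nH t k m + 2 * k) (j := 2 * k)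
    (Finset.univ : Finset ι) (fun e => φ e.1.1) (fun e => φ e.1.2) (Finset.univ.image φ)
    (by simp) (by simp) (fun e _ h => (hι e).ne (hφ h))
    (fun e _ => hrob _ (hφA _) _ (hφA _) (fun h => (hι e).ne (hφ h)))
    (by
      rw [Finset.card_univ, hcardι, Finset.card_image_of_injective _ hφ, Finset.card_univ,
        Fintype.card_fin, nH])
  let mk : (a b : Fin t) → a < b → Fin (m a b) → ι := fun a b h c =>
    ⟨(a, b), ⟨c, by rw [if_pos h]; exact c.2⟩⟩
  refine ⟨φ, fun a b c => if h : a < b then π (mk a b h c) else fun _ => φ a, hφ, ?_, ?_, ?_⟩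
  · intro a b h c
    simp only [dif_pos h]
    exact h1 (mk a b h c) (Finset.mem_univ _)
  · intro a b h c i hi hij d he
    simp only [dif_pos h] at he
    exact h2 (mk a b h c) (Finset.mem_univ _) i hi hij (by rw [he]; simp)
  · intro a b h a' b' h' c c' hne i i' hi hij hi' hij'
    simp only [dif_pos h, dif_pos h']
    refine h3 _ (Finset.mem_univ _) _ (Finset.mem_univ _) (fun he => hne ?_) i i' hi hij hi' hij'
    simp only [mk] at he
    have e1 := congrArg (fun e : ι => e.1) he
    have e2 := congrArg (fun e : ι => (e.2 : ℕ)) he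
    simp only [Prod.mk.injEq] at e1 e2
    exact Prod.ext e1.1 (Prod.ext e1.2 e2)

/-! ### Chains and fans -/

/-- Robust connections of lengths `r + ℓ` and `ℓ` between three large sets concatenate to robust
connections of length `2 (q ℓ + r)` inside the first of them. -/
lemma rob_chain {G : SimpleGraph V} {M ℓ r q : ℕ} (hℓ : 0 < ℓ) (hq : 1 ≤ q) (A Y X : Finset V)
    (hY : M < Y.card) (hX : M < X.card) (hA : ∀ a ∈ A, ∀ y ∈ Y, Rob G M (r + ℓ) a y)
    (hYX : ∀ y ∈ Y, ∀ x ∈ X, Rob G M ℓ y x) :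
    ∀ a ∈ A, ∀ b ∈ A, Rob G M (2 * (q * ℓ + r)) a b := by
  have hYY : ∀ j, ∀ y ∈ Y, ∀ y' ∈ Y, Rob G M (2 * ((j + 1) * ℓ)) y y' := by
    intro j
    induction j with
    | zero =>
      intro y hy y' hy'
      have := Rob.trans hℓ hℓ X hX (fun x hx => hYX y hy x hx) (fun x hx => (hYX y' hy' x hx).symm)
      rwa [show 2 * ((0 + 1) * ℓ) = ℓ + ℓ by ring]
    | succ j ih =>
      intro y hy y' hy'
      have h2 : ∀ z ∈ Y, Rob G M (ℓ + ℓ) z y' := fun z hz =>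
        Rob.trans hℓ hℓ X hX (fun x hx => hYX z hz x hx) (fun x hx => (hYX y' hy' x hx).symm)
      have := Rob.trans (by positivity) (by omega) Y hY (fun z hz => ih y hy z hz) h2
      rwa [show 2 * ((j + 1 + 1) * ℓ) = 2 * ((j + 1) * ℓ) + (ℓ + ℓ) by ring]
  intro a ha b hb
  obtain rfl | ⟨j, rfl⟩ : q = 1 ∨ ∃ j, q = j + 2 := by
    rcases Nat.lt_or_ge q 2 with h | h
    · left; omega
    · right; exact ⟨q - 2, by omega⟩
  · have := Rob.trans (by omega) (by omega) Y hY (fun z hz => hA a ha z hz)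
      (fun z hz => (hA b hb z hz).symm)
    rwa [show 2 * (1 * ℓ + r) = (r + ℓ) + (r + ℓ) by ring]
  · have h1 : ∀ y ∈ Y, Rob G M (2 * ((j + 1) * ℓ) + (r + ℓ)) y b := fun y hy =>
      Rob.trans (by positivity) (by omega) Y hY (fun z hz => hYY j y hy z hz)
        (fun z hz => (hA b hb z hz).symm)
    have := Rob.trans (by omega) (by positivity) Y hY (fun z hz => hA a ha z hz) h1
    rwa [show 2 * ((j + 2) * ℓ + r) = (r + ℓ) + (2 * ((j + 1) * ℓ) + (r + ℓ)) by ring]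

/-- There are `N` paths of length `r` from `w` ending in `X`, pairwise sharing no vertex other
than `w` at the start. For `r = 0` and `N > 0` this just says `w ∈ X`. -/
def Fan (G : SimpleGraph V) (X : Set V) (r N : ℕ) (w : V) : Prop :=
  ∃ Q : Fin N → ℕ → V, (∀ i, PathSeq G r (Q i) ∧ Q i 0 = w ∧ Q i r ∈ X) ∧
    ∀ i j, i ≠ j → ∀ a b, 0 < a → a ≤ r → 0 < b → b ≤ r → Q i a ≠ Q j b

/-- If there is no fan at `w`, the vertices of a maximal fan meet every path from `w` to `X`. -/
lemma exists_hitting {G : SimpleGraph V} {X : Set V} {r N : ℕ} {w : V} (h : ¬ Fan G X r N w) :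
    ∃ S : Finset V, S.card ≤ N * r ∧ ∀ p, PathSeq G r p → p 0 = w → p r ∈ X →
      ∃ a, 0 < a ∧ a ≤ r ∧ p a ∈ S := by
  classical
  obtain ⟨m, hmN, ⟨Q, hQ, hdis⟩, hmax⟩ : ∃ m < N, Fan G X r m w ∧ ¬ Fan G X r (m + 1) w := by
    by_contra hcon
    push Not at hcon
    have : ∀ m ≤ N, Fan G X r m w := by
      intro m
      induction m with
      | zero => exact fun _ => ⟨fun i => i.elim0, fun i => i.elim0, fun i => i.elim0⟩
      | succ m ih => exact fun hm => hcon m (by omega) (ih (by omega))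
    exact h (this N le_rfl)
  refine ⟨Finset.univ.biUnion fun i => (Finset.Ioc 0 r).image (Q i), ?_, ?_⟩
  · refine (Finset.card_biUnion_le_card_mul _ _ r fun i _ => ?_).trans ?_
    · exact Finset.card_image_le.trans (by simp)
    · simp only [Finset.card_univ, Fintype.card_fin]
      exact Nat.mul_le_mul_right _ hmN.le
  · intro p hp hp0 hpr
    by_contra hcon
    push Not at hcon
    simp only [Finset.mem_biUnion, Finset.mem_univ, Finset.mem_image, Finset.mem_Ioc, true_and,
      not_exists, not_and, and_imp] at hcon
    refine hmax ⟨Fin.cons p Q, fun i => ?_, fun i i' => ?_⟩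
    · refine Fin.cases ?_ (fun i => ?_) i
      · exact ⟨hp, hp0, hpr⟩
      · exact hQ i
    · refine Fin.cases ?_ (fun i => ?_) i <;> refine Fin.cases ?_ (fun i' => ?_) i'
      · intro h; exact absurd rfl h
      · intro _ a b ha har hb hbr heq
        exact hcon a ha har i' b hb hbr heq.symm
      · intro _ a b ha har hb hbr heq
        exact hcon b hb hbr i a ha har heq
      · intro hne a b ha har hb hbr
        exact hdis i i' (fun h => hne (by rw [h])) a b ha har hb hbr

/-- Many paths of length `ℓ` from `y₀` to `X` force many vertices with a fan of length `r < ℓ`. -/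
lemma card_le_of_few_fans {G : SimpleGraph V} {D : ℕ} (hD : ∀ v, (G.neighborSet v).ncard ≤ D)
    {X : Set V} {ℓ r N m₀ : ℕ} (hr : r < ℓ) (y₀ : V) (A : Set (ℕ → V))
    (hA : ∀ q ∈ A, PadSeq ℓ q ∧ PathSeq G ℓ q ∧ q 0 = y₀ ∧ q ℓ ∈ X)
    (hW : {w | Fan G X r N w}.ncard ≤ m₀) :
    A.ncard ≤ (m₀ + N * r * r) * D ^ (ℓ - 1) := by
  classical
  have hex : ∀ w, ∃ S : Finset V, S.card ≤ N * r ∧ (¬ Fan G X r N w → ∀ p, PathSeq G r p →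
      p 0 = w → p r ∈ X → ∃ a, 0 < a ∧ a ≤ r ∧ p a ∈ S) := by
    intro w
    by_cases h : Fan G X r N w
    · exact ⟨∅, by simp, fun h' => absurd h h'⟩
    · obtain ⟨S, h1, h2⟩ := exists_hitting h
      exact ⟨S, h1, fun _ => h2⟩
  choose S hS hS' using hex
  let A0 : Set (ℕ → V) := {q | PadSeq ℓ q ∧ WalkSeq G ℓ q ∧ q 0 = y₀ ∧
    q (ℓ - r - 1 + 1) ∈ {w | Fan G X r N w}}
  let A1 : ℕ → Set (ℕ → V) := fun a => {q | PadSeq ℓ q ∧ WalkSeq G ℓ q ∧ q 0 = y₀ ∧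
    q (ℓ - r + a + 1) ∈ (S (q (ℓ - r)) : Set V)}
  have hsub : A ⊆ A0 ∪ ⋃ a ∈ Finset.range r, A1 a := by
    intro q hq
    obtain ⟨hpad, hpath, h0, hX⟩ := hA q hq
    by_cases hf : Fan G X r N (q (ℓ - r))
    · left
      refine ⟨hpad, hpath.1, h0, ?_⟩
      rw [show ℓ - r - 1 + 1 = ℓ - r by omega]; exact hf
    · right
      obtain ⟨a, ha0, har, ha⟩ := hS' _ hf (shiftSeq (ℓ - r) q) (hpath.sub (by omega)) rfl (by
        simp only [shiftSeq]; rwa [show ℓ - r + r = ℓ by omega])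
      simp only [Set.mem_iUnion]
      refine ⟨a - 1, Finset.mem_range.2 (by omega), hpad, hpath.1, h0, ?_⟩
      rw [show ℓ - r + (a - 1) + 1 = ℓ - r + a by omega]; exact ha
  have hfin : (A0 ∪ ⋃ a ∈ Finset.range r, A1 a).Finite := by
    refine (finite_padSeq ℓ).subset ?_
    rintro q (hq | hq)
    · exact hq.1
    · simp only [Set.mem_iUnion] at hq
      obtain ⟨a, _, hq⟩ := hq
      exact hq.1
  have h0 : A0.ncard ≤ m₀ * D ^ (ℓ - 1) :=
    walk_count_through hD (e := 0) (i := ℓ - r - 1) y₀ (fun _ => {w | Fan G X r N w})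
      (fun _ => hW) (by omega) (by omega)
  have h1 : ∀ a ∈ Finset.range r, (A1 a).ncard ≤ N * r * D ^ (ℓ - 1) := fun a ha =>
    walk_count_through hD (e := ℓ - r) (i := ℓ - r + a) y₀ (fun w => (S w : Set V))
      (fun w => by rw [Set.ncard_coe_finset]; exact hS w) (by omega)
      (by have := Finset.mem_range.1 ha; omega)
  calc A.ncard ≤ (A0 ∪ ⋃ a ∈ Finset.range r, A1 a).ncard := Set.ncard_le_ncard hsub hfin
    _ ≤ A0.ncard + (⋃ a ∈ Finset.range r, A1 a).ncard := Set.ncard_union_le _ _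
    _ ≤ A0.ncard + ∑ a ∈ Finset.range r, (A1 a).ncard :=
        Nat.add_le_add_left (Finset.set_ncard_biUnion_le _ _) _
    _ ≤ m₀ * D ^ (ℓ - 1) + ∑ a ∈ Finset.range r, N * r * D ^ (ℓ - 1) :=
        Nat.add_le_add h0 (Finset.sum_le_sum h1)
    _ = _ := by simp only [Finset.sum_const, Finset.card_range, smul_eq_mul]; ring

/-- A vertex with a large fan to `X` inherits robust connections from the vertices of `X`. -/
lemma rob_of_fan {G : SimpleGraph V} {M ℓ r N : ℕ} {X : Set V} {w : V} (Y : Finset V) {d : ℝ}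
    (hℓ : 0 < ℓ) (hN : 0 < N) (hd0 : 0 ≤ d) (hfan : Fan G X r N w)
    (hX : ∀ x ∈ X, d ≤ ({y | y ∈ Y ∧ Rob G M ℓ x y}.ncard : ℝ))
    (hNd : ((M + 1 : ℕ) : ℝ) * Y.card ≤ N * d / 2) :
    d / 2 ≤ ({y | y ∈ Y ∧ Rob G M (r + ℓ) w y}.ncard : ℝ) := by
  classical
  have hset : ∀ P : V → Prop, ({y | y ∈ Y ∧ P y} : Set V).ncard = (Y.filter P).card := by
    intro P
    rw [← Set.ncard_coe_finset]; congr 1; ext y; simp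
  obtain ⟨Q, hQ, hdis⟩ := hfan
  rcases Nat.eq_zero_or_pos r with rfl | hr
  · have h := hX w (by have := hQ ⟨0, hN⟩; rw [← this.2.1]; exact this.2.2)
    rw [zero_add]
    linarith
  · have hp := popular (Finset.univ : Finset (Fin N)) Y (fun i y => Rob G M ℓ (Q i r) y) (M + 1) d
      (by simpa using hN) (fun i _ => by
        rw [← hset]; exact hX _ (hQ i).2.2) (by simpa using hNd)
    refine hp.trans ?_
    rw [hset]
    refine Nat.cast_le.2 (Finset.card_le_card fun y hy => ?_)
    rw [Finset.mem_filter] at hy ⊢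
    refine ⟨hy.1, rob_of_disjoint hr hℓ Q _ hy.2 (fun i => (hQ i).1) (fun i => (hQ i).2.1) hdis
      fun i hi => (Finset.mem_filter.1 hi).2⟩

/-! ### Cleaning and the three sets -/

/-- Fibrewise counting from below: a map all of whose fibres over `B` have at least `d` elements. -/
lemma mul_ncard_le_of_fiber {α β : Type*} {A : Set α} (hA : A.Finite) (φ : α → β) {B : Set β}
    (hB : B.Finite) (h : ∀ a ∈ A, φ a ∈ B) (d : ℝ)
    (hd : ∀ b ∈ B, d ≤ (({a ∈ A | φ a = b}).ncard : ℝ)) :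
    d * B.ncard ≤ (A.ncard : ℝ) := by
  classical
  rw [Set.ncard_eq_toFinset_card A hA, Set.ncard_eq_toFinset_card B hB]
  rw [Finset.card_eq_sum_card_fiberwise (f := φ) (t := hB.toFinset)
    (fun a ha => by simpa using h a (by simpa using ha))]
  push_cast
  rw [mul_comm, ← nsmul_eq_mul]
  refine Finset.card_nsmul_le_sum _ _ _ fun b hb => ?_
  refine (hd b (by simpa using hb)).trans (le_of_eq ?_)
  rw [← Set.ncard_coe_finset]
  congr 2
  ext a; simp

/-- Walks `P` of length `ℓ - 1` from `u`, as a set of padded sequences. -/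
def walksFrom (G : SimpleGraph V) (ℓ : ℕ) (u : V) : Set (ℕ → V) :=
  {P | PadSeq (ℓ - 1) P ∧ WalkSeq G (ℓ - 1) P ∧ P 0 = u}

lemma walksFrom_finite (G : SimpleGraph V) (ℓ : ℕ) (u : V) : (walksFrom G ℓ u).Finite :=
  (finite_padSeq _).subset fun _ h => h.1

lemma shift_mem_walksFrom {G : SimpleGraph V} {ℓ : ℕ} (hℓ : 2 ≤ ℓ) {v : ℕ → V} {u : V}
    (hp : PadSeq ℓ v) (hw : WalkSeq G ℓ v) (hu : v 1 = u) : shiftSeq 1 v ∈ walksFrom G ℓ u := by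
  refine ⟨PadSeq.shift (by rwa [show 1 + (ℓ - 1) = ℓ by omega]), fun i hi => ?_, hu⟩
  exact hw (1 + i) (by omega)

lemma shift_last {ℓ : ℕ} (hℓ : 2 ≤ ℓ) (v : ℕ → V) : shiftSeq 1 v (ℓ - 1) = v ℓ := by
  simp only [shiftSeq]; rw [show 1 + (ℓ - 1) = ℓ by omega]

lemma shift_injective {v v' : ℕ → V} (h0 : v 0 = v' 0) (h : shiftSeq 1 v = shiftSeq 1 v') :
    v = v' := by
  funext i
  cases i with
  | zero => exact h0
  | succ i => have := congrFun h i; simpa [shiftSeq, add_comm] using this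

/-- Cleaning: deleting starts with few continuations, and then ends with few starts, loses few
of the sequences in `P`. Here `R` holds between the two ends of every sequence in `P`, and after
the cleaning it holds densely at every remaining end. -/
lemma clean {G : SimpleGraph V} {D : ℕ} (hD : ∀ v, (G.neighborSet v).ncard ≤ D) {ℓ : ℕ}
    (hℓ : 2 ≤ ℓ) (u : V) (R : V → V → Prop) (P : Set (ℕ → V))
    (hP : ∀ v ∈ P, PadSeq ℓ v ∧ WalkSeq G ℓ v ∧ v 1 = u ∧ R (v 0) (v ℓ)) {d₁ d₂ : ℝ}
    (hd₁ : 0 ≤ d₁) (hd₂ : 0 ≤ d₂) :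
    ∃ Y : Finset V, Y.card ≤ D ∧
      (∀ y ∈ Y, d₂ ≤ ({p | p ∈ walksFrom G ℓ u ∧ R y (p (ℓ - 1))}.ncard : ℝ)) ∧
      (P.ncard : ℝ) ≤
        ({v ∈ P | v 0 ∈ Y ∧ d₁ ≤ ({y | y ∈ Y ∧ R y (v ℓ)}.ncard : ℝ)}.ncard : ℝ)
          + d₂ * D + d₁ * D ^ (ℓ - 1) := by
  classical
  have hPf : P.Finite := (finite_padSeq ℓ).subset fun v hv => (hP v hv).1
  have hnb : ∀ v ∈ P, v 0 ∈ G.neighborSet u := fun v hv => by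
    obtain ⟨_, hw, h1, _⟩ := hP v hv
    have := hw 0 (by omega)
    rw [zero_add, h1] at this
    exact this.symm
  let Y : Finset V := Finset.univ.filter fun y =>
    y ∈ G.neighborSet u ∧ d₂ ≤ (({v ∈ P | v 0 = y}).ncard : ℝ)
  have hYm : ∀ y, y ∈ Y ↔ y ∈ G.neighborSet u ∧ d₂ ≤ (({v ∈ P | v 0 = y}).ncard : ℝ) := by
    intro y; simp only [Y, Finset.mem_filter, Finset.mem_univ, true_and]
  refine ⟨Y, ?_, ?_, ?_⟩
  · rw [← Set.ncard_coe_finset]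
    refine (Set.ncard_le_ncard (fun y hy => ?_) (Set.toFinite _)).trans (hD u)
    exact ((hYm y).1 hy).1
  · intro y hy
    refine ((hYm y).1 hy).2.trans (Nat.cast_le.2 ?_)
    refine Set.ncard_le_ncard_of_injOn (shiftSeq 1) ?_ ?_
      ((walksFrom_finite G ℓ u).subset fun p hp => hp.1)
    · rintro v ⟨hv, rfl⟩
      obtain ⟨hp, hw, h1, hr⟩ := hP v hv
      exact ⟨shift_mem_walksFrom hℓ hp hw h1, by rwa [shift_last hℓ]⟩
    · intro v hv v' hv' h
      exact shift_injective (hv.2.trans hv'.2.symm) h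
  · set P₁ : Set (ℕ → V) := {v ∈ P | v 0 ∉ Y} with hP₁
    set P₂ : Set (ℕ → V) := {v ∈ P | v 0 ∈ Y ∧ ¬ d₁ ≤ ({y | y ∈ Y ∧ R y (v ℓ)}.ncard : ℝ)} with hP₂
    set P₃ : Set (ℕ → V) := {v ∈ P | v 0 ∈ Y ∧ d₁ ≤ ({y | y ∈ Y ∧ R y (v ℓ)}.ncard : ℝ)} with hP₃
    have hu : P.ncard ≤ P₃.ncard + P₁.ncard + P₂.ncard := by
      refine le_trans (Set.ncard_le_ncard (t := (P₃ ∪ P₁) ∪ P₂) ?_ ?_)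
        ((Set.ncard_union_le _ _).trans (Nat.add_le_add_right (Set.ncard_union_le _ _) _))
      · intro v hv
        by_cases h1 : v 0 ∈ Y
        · by_cases h2 : d₁ ≤ ({y | y ∈ Y ∧ R y (v ℓ)}.ncard : ℝ)
          · exact Or.inl (Or.inl ⟨hv, h1, h2⟩)
          · exact Or.inr ⟨hv, h1, h2⟩
        · exact Or.inl (Or.inr ⟨hv, h1⟩)
      · refine hPf.subset ?_
        rintro v ((h | h) | h) <;> exact h.1
    have h1 : (P₁.ncard : ℝ) ≤ d₂ * D := by
      refine (ncard_le_mul_fiber (hPf.subset fun v hv => hv.1) (fun v => v 0)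
        (B := G.neighborSet u) (Set.toFinite _) (fun v hv => hnb v hv.1) d₂ ?_).trans
        (mul_le_mul_of_nonneg_left (Nat.cast_le.2 (hD u)) hd₂)
      intro y hy
      by_cases hyY : y ∈ Y
      · have : {v ∈ P₁ | v 0 = y} = ∅ := by
          ext v
          simp only [hP₁, Set.mem_ofPred_eq, Set.mem_empty_iff_false, iff_false]
          rintro ⟨h, rfl⟩
          exact h.2 hyY
        rw [this]; simpa using hd₂
      · have h2 : ¬ d₂ ≤ (({v ∈ P | v 0 = y}).ncard : ℝ) := fun h => hyY ((hYm y).2 ⟨hy, h⟩)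
        refine le_trans (Nat.cast_le.2 (Set.ncard_le_ncard ?_ (hPf.subset fun v hv => hv.1)))
          (not_le.1 h2).le
        exact fun v hv => ⟨hv.1.1, hv.2⟩
    have h2 : (P₂.ncard : ℝ) ≤ d₁ * D ^ (ℓ - 1) := by
      refine (ncard_le_mul_fiber (hPf.subset fun v hv => hv.1) (shiftSeq 1)
        (walksFrom_finite G ℓ u) (fun v hv => ?_) d₁ ?_).trans
        (mul_le_mul_of_nonneg_left ?_ hd₁)
      · obtain ⟨hp, hw, h1, hr⟩ := hP v hv.1
        exact shift_mem_walksFrom hℓ hp hw h1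
      · intro p _
        rcases Set.eq_empty_or_nonempty {v ∈ P₂ | shiftSeq 1 v = p} with h | ⟨v₀, hv₀, hvp⟩
        · rw [h]; simpa using hd₁
        · refine le_trans (Nat.cast_le.2 ?_) (not_le.1 hv₀.2.2).le
          refine Set.ncard_le_ncard_of_injOn (fun v => v 0) ?_ ?_ (Set.toFinite _)
          · rintro v ⟨hv, h⟩
            refine ⟨hv.2.1, ?_⟩
            rw [← shift_last hℓ v₀, hvp, ← h, shift_last hℓ]
            exact (hP v hv.1).2.2.2
          · intro v hv v' hv' h
            exact shift_injective h (hv.2.trans hv'.2.symm)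
      · exact_mod_cast walk_count hD (ℓ - 1) u
    have : (P.ncard : ℝ) ≤ P₃.ncard + P₁.ncard + P₂.ncard := by exact_mod_cast hu
    linarith

/-- Bad paths multiply: each end of a bad path from `y₀` is joined to `y₀` by more than
`f(ℓ, L)` admissible paths, while few bad paths `y₀ u … x` share both ends because their
parts from `u` are good. -/
lemma exists_many_admissible {G : SimpleGraph V} {L : ℝ} (hL : 1 ≤ L) {D ℓ : ℕ} (hℓ : 2 ≤ ℓ)
    (u : V) (Y : Finset V) (hY : Y.card ≤ D) (X : Set V) (P : Set (ℕ → V))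
    (hP : ∀ v ∈ P, PadSeq ℓ v ∧ Admissible G L ℓ v ∧ ¬ Good G L ℓ v ∧ v 1 = u ∧ v 0 ∈ Y ∧
      v ℓ ∈ X) :
    ∃ y₀ : V, ∃ A : Set (ℕ → V), (∀ q ∈ A, PadSeq ℓ q ∧ PathSeq G ℓ q ∧ q 0 = y₀ ∧ q ℓ ∈ X) ∧
      (P.ncard : ℝ) * L ^ 5 ^ ℓ ≤ D * L ^ 5 ^ (ℓ - 1) * A.ncard := by
  classical
  have hL0 : 0 ≤ L := by linarith
  have hPf : P.Finite := (finite_padSeq ℓ).subset fun v hv => (hP v hv).1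
  obtain ⟨y₀, _, hmax⟩ := Finset.exists_max_image (Finset.univ : Finset V)
    (fun y => ({v ∈ P | v 0 = y}).ncard) ⟨u, Finset.mem_univ u⟩
  set F : Set (ℕ → V) := {v ∈ P | v 0 = y₀} with hF
  have hFf : F.Finite := hPf.subset fun v hv => hv.1
  have h1 : (P.ncard : ℝ) ≤ F.ncard * D := by
    refine (ncard_le_mul_fiber hPf (fun v => v 0) (B := (Y : Set V)) (Set.toFinite _)
      (fun v hv => (hP v hv).2.2.2.2.1) F.ncard fun y _ => ?_).trans ?_
    · exact Nat.cast_le.2 (hmax y (Finset.mem_univ y))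
    · rw [Set.ncard_coe_finset]
      exact mul_le_mul_of_nonneg_left (Nat.cast_le.2 hY) (Nat.cast_nonneg _)
  set E : Set V := (fun v => v ℓ) '' F with hE
  have h2 : (F.ncard : ℝ) ≤ L ^ 5 ^ (ℓ - 1) * E.ncard := by
    refine ncard_le_mul_fiber hFf (fun v => v ℓ) (B := E) (Set.toFinite _)
      (fun v hv => ⟨v, hv, rfl⟩) _ fun x _ => ?_
    rcases Set.eq_empty_or_nonempty {v ∈ F | v ℓ = x} with h | ⟨v₀, hv₀, hx⟩
    · rw [h]; simp only [Set.ncard_empty, Nat.cast_zero]; positivity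
    have hg : ∀ v ∈ P, Good G L (ℓ - 1) (shiftSeq 1 v) := fun v hv =>
      (hP v hv).2.1.good_sub (by omega) (by omega) (by omega)
    refine le_trans (Nat.cast_le.2 ?_) (hg v₀ hv₀.1).admSet_le
    refine Set.ncard_le_ncard_of_injOn (shiftSeq 1) ?_ ?_ (admSet_finite _ _ _ _ _)
    · rintro v ⟨hv, hvx⟩
      obtain ⟨hp, ha, hb, hu, _⟩ := hP v hv.1
      refine ⟨?_, ?_, ?_, (good_iff.1 (hg v hv.1)).1⟩
      · exact hu.trans (hP v₀ hv₀.1).2.2.2.1.symm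
      · rw [shift_last hℓ, shift_last hℓ, hvx, hx]
      · exact PadSeq.shift (by rwa [show 1 + (ℓ - 1) = ℓ by omega])
    · intro v hv v' hv' h
      exact shift_injective (hv.1.2.trans hv'.1.2.symm) h
  let A : Set (ℕ → V) := {q | q ℓ ∈ E ∧ q 0 = y₀ ∧ PadSeq ℓ q ∧ Admissible G L ℓ q}
  have h3 : L ^ 5 ^ ℓ * E.ncard ≤ (A.ncard : ℝ) := by
    refine mul_ncard_le_of_fiber ((finite_padSeq ℓ).subset fun q hq => hq.2.2.1) (fun q => q ℓ)
      (Set.toFinite _) (fun q hq => hq.1) _ fun x hx => ?_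
    obtain ⟨v, hv, rfl⟩ := hx
    obtain ⟨hp, ha, hb, hu, _⟩ := hP v hv.1
    refine (lt_admSet ha hb).le.trans (Nat.cast_le.2 ?_)
    refine Set.ncard_le_ncard ?_ ((finite_padSeq ℓ).subset fun q hq => hq.1.2.2.1)
    intro q hq
    exact ⟨⟨⟨v, hv, hq.2.1.symm⟩, hq.1.trans hv.2, hq.2.2.1, hq.2.2.2⟩, hq.2.1⟩
  refine ⟨y₀, A, ?_, ?_⟩
  · rintro q ⟨⟨v, hv, hvq⟩, h0, hp, ha⟩
    refine ⟨hp, ha.1, h0, ?_⟩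
    rw [← hvq]; exact (hP v hv.1).2.2.2.2.2
  · have p1 : 0 ≤ L ^ 5 ^ ℓ := by positivity
    have p2 : 0 ≤ L ^ 5 ^ (ℓ - 1) := by positivity
    calc (P.ncard : ℝ) * L ^ 5 ^ ℓ ≤ (L ^ 5 ^ (ℓ - 1) * E.ncard * D) * L ^ 5 ^ ℓ := by
          gcongr; exact h1.trans (mul_le_mul_of_nonneg_right h2 (Nat.cast_nonneg _))
      _ = D * L ^ 5 ^ (ℓ - 1) * (L ^ 5 ^ ℓ * E.ncard) := by ring
      _ ≤ _ := by gcongr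

/-- Two applications of the Kővári–Sós–Turán count produce the three sets used by
`rob_chain`. -/
lemma exists_three_sets {G : SimpleGraph V} {D M s m₀ ℓ r : ℕ} {d₁ d₂ : ℝ} (hD0 : 0 < D)
    (hD : ∀ v, (G.neighborSet v).ncard ≤ D) (hℓ : 2 ≤ ℓ) (u : V) (Y W : Finset V)
    (hY : Y.card ≤ D) (hm₀ : 0 < m₀) (hWc : W.card = m₀) (hsm : s ≤ m₀)
    (hW : ∀ w ∈ W, d₁ ≤ ({y | y ∈ Y ∧ Rob G M (r + ℓ) w y}.ncard : ℝ))
    (hYw : ∀ y ∈ Y, d₂ ≤ ({p | p ∈ walksFrom G ℓ u ∧ Rob G M ℓ y (p (ℓ - 1))}.ncard : ℝ))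
    (n₁ : (s : ℝ) * D ≤ m₀ * d₁ / 2) (n₂ : (m₀ : ℝ) ^ s * m₀ ≤ d₁ / 2)
    (n₃ : (s : ℝ) * D ^ (ℓ - 1) ≤ m₀ * d₂ / 2)
    (n₄ : (m₀ : ℝ) ^ s * (D ^ (ℓ - 2) * s) ≤ d₂ / 2) :
    ∃ A Y' X : Finset V, A.card = s ∧ Y'.card = s ∧ s ≤ X.card ∧
      (∀ a ∈ A, ∀ y ∈ Y', Rob G M (r + ℓ) a y) ∧ (∀ y ∈ Y', ∀ x ∈ X, Rob G M ℓ y x) := by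
  classical
  have hm₀' : (0 : ℝ) < (m₀ : ℝ) ^ s := by positivity
  obtain ⟨A, hAW, hAs, hA⟩ := kst W Y (fun w y => Rob G M (r + ℓ) w y) s d₁ (by omega) hW
    (by
      rw [hWc]
      exact le_trans (mul_le_mul_of_nonneg_left (Nat.cast_le.2 hY) (Nat.cast_nonneg _)) n₁)
    (by omega)
  rw [hWc] at hA
  have hc : m₀ ≤ {y | y ∈ Y ∧ ∀ a ∈ A, Rob G M (r + ℓ) a y}.ncard := by
    exact_mod_cast le_of_mul_le_mul_left (n₂.trans hA) hm₀'
  have hfin : {y | y ∈ Y ∧ ∀ a ∈ A, Rob G M (r + ℓ) a y}.Finite := Set.toFinite _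
  rw [Set.ncard_eq_toFinset_card _ hfin] at hc
  obtain ⟨W', hW', hWc'⟩ := Finset.exists_subset_card_eq hc
  have hW'm : ∀ y ∈ W', y ∈ Y ∧ ∀ a ∈ A, Rob G M (r + ℓ) a y := fun y hy => by
    simpa using hW' hy
  obtain ⟨Y', hYW, hYs, hY'⟩ := kst W' (walksFrom_finite G ℓ u).toFinset
    (fun y p => Rob G M ℓ y (p (ℓ - 1))) s d₂ (by omega)
    (fun y hy => by simpa using hYw y (hW'm y hy).1)
    (by
      rw [hWc', ← Set.ncard_eq_toFinset_card _ (walksFrom_finite G ℓ u)]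
      refine le_trans (mul_le_mul_of_nonneg_left ?_ (Nat.cast_nonneg _)) n₃
      exact_mod_cast walk_count hD (ℓ - 1) u)
    (by omega)
  rw [hWc'] at hY'
  set Q : Set (ℕ → V) := {p | p ∈ (walksFrom_finite G ℓ u).toFinset ∧
    ∀ a ∈ Y', Rob G M ℓ a (p (ℓ - 1))} with hQ
  have hQm : ∀ p ∈ Q, p ∈ walksFrom G ℓ u := fun p hp => by simpa using hp.1
  set E : Set V := (fun p => p (ℓ - 1)) '' Q with hE
  have hQE : (Q.ncard : ℝ) ≤ D ^ (ℓ - 2) * E.ncard := by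
    refine ncard_le_mul_fiber ((walksFrom_finite G ℓ u).subset hQm) (fun p => p (ℓ - 1))
      (B := E) (Set.toFinite _) (fun p hp => ⟨p, hp, rfl⟩) _ fun x _ => ?_
    have := walk_count_through hD (j := ℓ - 1) (i := ℓ - 2) (e := 0) (σ := 1) u (fun _ => {x})
      (fun _ => by simp) (by omega) (by omega)
    rw [one_mul, show ℓ - 1 - 1 = ℓ - 2 by omega] at this
    refine le_trans (Nat.cast_le.2 ((Set.ncard_le_ncard ?_ ?_).trans this)) (by push_cast; rfl)
    · rintro p ⟨hp, hx⟩
      obtain ⟨h1, h2, h3⟩ := hQm p hp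
      refine ⟨h1, h2, h3, ?_⟩
      rw [show ℓ - 2 + 1 = ℓ - 1 by omega]; exact hx
    · exact (finite_padSeq (ℓ - 1)).subset fun p hp => hp.1
  have hs : s ≤ E.ncard := by
    have h1 : (m₀ : ℝ) ^ s * (D ^ (ℓ - 2) * s) ≤ (m₀ : ℝ) ^ s * (D ^ (ℓ - 2) * E.ncard) :=
      n₄.trans (hY'.trans (mul_le_mul_of_nonneg_left hQE hm₀'.le))
    have h2 := le_of_mul_le_mul_left (le_of_mul_le_mul_left h1 hm₀') (by positivity)
    exact_mod_cast h2
  refine ⟨A, Y', E.toFinset, hAs, hYs, by rwa [← Set.ncard_eq_toFinset_card'], ?_, ?_⟩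
  · exact fun a ha y hy => (hW'm y (hYW hy)).2 a ha
  · intro y hy x hx
    obtain ⟨p, hp, rfl⟩ := Set.mem_toFinset.1 hx
    exact hp.2 y hy

/-! ### Many bad paths force the subdivision -/

/-- The numerical relations between the parameters: `a = K ^ k`, `s` is the size of the sets to
be produced, `m₀ ≈ 16 a² s L` and `δ` is polynomially large in `L`; `b` stands for a power of `K`
with exponent at most `k`. -/
lemma numerics {a b L δ : ℝ} {s k m₀ : ℕ} (ha : 1 ≤ a) (hs : 1 ≤ s) (hδ0 : 0 < δ)
    (hb0 : 0 ≤ b) (hba : b ≤ a)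
    (hL : 32 * a ^ 2 * s * (k ^ 2 + 1) ≤ L) (hδ : L ^ (2 * s + 4) ≤ δ)
    (hm : m₀ = ⌈16 * a ^ 2 * s * L⌉₊) :
    1 ≤ L ∧ 0 < m₀ ∧ s ≤ m₀ ∧ (m₀ : ℝ) ≤ L ^ 2 ∧ 2 * a * (1 + k ^ 2) < L ∧
    (s : ℝ) * (b * δ) ≤ m₀ * (δ / (4 * a * L) / 2) / 2 ∧
    (m₀ : ℝ) ^ s * m₀ ≤ δ / (4 * a * L) / 2 / 2 ∧
    (s : ℝ) * b ≤ m₀ * (1 / (4 * a * L)) / 2 ∧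
    (m₀ : ℝ) ^ s * (b * s) ≤ δ / (4 * a * L) / 2 := by
  have hs' : (1 : ℝ) ≤ s := by exact_mod_cast hs
  have hk0 : (0 : ℝ) ≤ (k : ℝ) ^ 2 := by positivity
  have ha2 : a ≤ a ^ 2 := by nlinarith
  have h32 : 32 * a ^ 2 * s ≤ L := by
    refine le_trans ?_ hL
    have : 0 ≤ 32 * a ^ 2 * s := by positivity
    nlinarith
  have has : a ^ 2 ≤ a ^ 2 * s := by nlinarith [sq_nonneg a]
  have hL1 : 1 ≤ L := by nlinarith
  have hL0 : 0 < L := by linarith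
  set x := 16 * a ^ 2 * s * L with hx
  have hx1 : 16 * s ≤ x := by
    have : 1 ≤ a ^ 2 * L := by nlinarith
    rw [hx]; nlinarith
  have hmx : x ≤ m₀ := by rw [hm]; exact Nat.le_ceil _
  have hmx' : (m₀ : ℝ) ≤ 2 * x := by
    have := (Nat.ceil_lt_add_one (show 0 ≤ x by linarith)).le
    rw [← hm] at this
    linarith
  have hmL : (m₀ : ℝ) ≤ L ^ 2 := by
    refine hmx'.trans ?_
    rw [hx]; nlinarith
  have hsm : s ≤ m₀ := by
    have : (s : ℝ) ≤ m₀ := by linarith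
    exact_mod_cast this
  have hmp : (m₀ : ℝ) ^ s ≤ L ^ (2 * s) := by
    rw [pow_mul]; exact pow_le_pow_left₀ (Nat.cast_nonneg _) hmL _
  have h4 : 0 < 4 * a * L := by positivity
  have key : L ^ (2 * s) * L ^ 4 ≤ δ := by rwa [← pow_add]
  have hp0 : 0 < L ^ (2 * s) := by positivity
  refine ⟨hL1, by omega, hsm, hmL, ?_, ?_, ?_, ?_, ?_⟩
  · have : 0 < a * (1 + (k : ℝ) ^ 2) := by positivity
    have h2 : a * (1 + (k : ℝ) ^ 2) ≤ a ^ 2 * s * (k ^ 2 + 1) := by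
      have := mul_le_mul_of_nonneg_right (ha2.trans has) (show 0 ≤ 1 + (k : ℝ) ^ 2 by positivity)
      linarith
    linarith
  · rw [show (m₀ : ℝ) * (δ / (4 * a * L) / 2) / 2 = (m₀ * δ) / (16 * a * L) by field_simp; ring]
    rw [le_div_iff₀ (by positivity)]
    have e : (s : ℝ) * (b * δ) * (16 * a * L) ≤ x * δ := by
      rw [hx]
      have : b * (s * δ * (16 * a * L)) ≤ a * (s * δ * (16 * a * L)) :=
        mul_le_mul_of_nonneg_right hba (by positivity)
      nlinarith
    exact e.trans (mul_le_mul_of_nonneg_right hmx hδ0.le)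
  · rw [show δ / (4 * a * L) / 2 / 2 = δ / (16 * a * L) by field_simp; ring]
    rw [le_div_iff₀ (by positivity)]
    have e : 16 * a * L ≤ L ^ 2 := by nlinarith
    calc (m₀ : ℝ) ^ s * m₀ * (16 * a * L) ≤ L ^ (2 * s) * L ^ 2 * L ^ 2 := by gcongr
      _ = L ^ (2 * s) * L ^ 4 := by ring
      _ ≤ δ := key
  · rw [show (m₀ : ℝ) * (1 / (4 * a * L)) / 2 = m₀ / (8 * a * L) by field_simp; ring]
    rw [le_div_iff₀ (by positivity)]
    refine le_trans ?_ hmx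
    rw [hx]
    have : b * (s * (8 * a * L)) ≤ a * (s * (8 * a * L)) :=
      mul_le_mul_of_nonneg_right hba (by positivity)
    have : 0 ≤ a ^ 2 * s * L := by positivity
    nlinarith
  · rw [show δ / (4 * a * L) / 2 = δ / (8 * a * L) by field_simp; ring]
    rw [le_div_iff₀ (by positivity)]
    have e : b * s * (8 * a * L) ≤ L ^ 2 := by
      have h1 : b * (s * (8 * a * L)) ≤ a * (s * (8 * a * L)) :=
        mul_le_mul_of_nonneg_right hba (by positivity)
      have : 0 ≤ a ^ 2 * s * L := by positivity
      have h3 := mul_le_mul_of_nonneg_right h32 hL0.le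
      nlinarith
    have hL2 : L ^ 2 ≤ L ^ 4 := pow_le_pow_right₀ hL1 (by norm_num)
    calc (m₀ : ℝ) ^ s * (b * s) * (8 * a * L) = (m₀ : ℝ) ^ s * (b * s * (8 * a * L)) := by ring
      _ ≤ L ^ (2 * s) * L ^ 4 := mul_le_mul hmp (e.trans hL2) (by positivity) hp0.le
      _ ≤ δ := key

set_option maxHeartbeats 1000000 in
/-- Too many admissible paths of length `ℓ` that are not good force the subdivision. -/
lemma contains_of_many_bad {G : SimpleGraph V} {t k K δ ℓ : ℕ} (m : Fin t → Fin t → ℕ) {L : ℝ}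
    (hK : 1 ≤ K) (hℓ : 2 ≤ ℓ) (hℓk : ℓ ≤ k) (hD : ∀ v, (G.neighborSet v).ncard ≤ K * δ)
    (hδ0 : 0 < δ)
    (hL : 32 * ((K : ℝ) ^ k) ^ 2 * (nH t k m + 2 * k + 1 : ℕ) * (k ^ 2 + 1) ≤ L)
    (hδ : L ^ (2 * (nH t k m + 2 * k + 1) + 4) ≤ (δ : ℝ))
    (hB : Fintype.card V * ((δ : ℝ) ^ ℓ / L) <
      ({v : ℕ → V | PadSeq ℓ v ∧ Admissible G L ℓ v ∧ ¬ Good G L ℓ v}.ncard : ℝ)) :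
    ContainsMultiSubdiv G t m (2 * k) := by
  classical
  set M := nH t k m + 2 * k with hM
  set s := M + 1 with hs
  set a : ℝ := (K : ℝ) ^ k with ha
  have hK1 : (1 : ℝ) ≤ K := by exact_mod_cast hK
  have ha1 : 1 ≤ a := one_le_pow₀ hK1
  have hδr : (0 : ℝ) < δ := by exact_mod_cast hδ0
  have hKa : ∀ i ≤ k, (K : ℝ) ^ i ≤ a := fun i hi => pow_le_pow_right₀ hK1 hi
  set m₀ := ⌈16 * a ^ 2 * s * L⌉₊ with hm₀
  have num := fun i (hi : i ≤ k) => numerics (k := k) (b := (K : ℝ) ^ i) ha1 (show 1 ≤ s by omega)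
    hδr (by positivity) (hKa i hi) hL hδ hm₀
  obtain ⟨hL1, hm₀0, hsm, hmL, hkL, n₁, n₂, -, -⟩ := num 1 (by omega)
  obtain ⟨-, -, -, -, -, -, -, n₃, -⟩ := num (ℓ - 1) (by omega)
  obtain ⟨-, -, -, -, -, -, -, -, n₄⟩ := num (ℓ - 2) (by omega)
  have hL0 : 0 < L := by linarith
  set T : ℝ := (δ : ℝ) ^ ℓ / L with hT
  have hT0 : 0 < T := by positivity
  -- Thresholds for the cleaning: since all degrees are at most `K δ`, the deletions with
  -- threshold `d₁` or `d₂` cost at most a quarter of the `T` sequences each.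
  set d₁ : ℝ := δ / (4 * a * L) with hd₁
  set d₂ : ℝ := (δ : ℝ) ^ (ℓ - 1) * (1 / (4 * a * L)) with hd₂
  have hd₁0 : 0 ≤ d₁ := by positivity
  have hd₂0 : 0 ≤ d₂ := by positivity
  have hδℓ : (δ : ℝ) ^ ℓ = δ ^ (ℓ - 1) * δ := by rw [← pow_succ]; congr 1; omega
  have hδℓ' : (δ : ℝ) ^ (ℓ - 1) = δ ^ (ℓ - 2) * δ := by rw [← pow_succ]; congr 1; omega
  -- a popular second vertex `u`
  set B : Set (ℕ → V) := {v | PadSeq ℓ v ∧ Admissible G L ℓ v ∧ ¬ Good G L ℓ v} with hBdef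
  have hBf : B.Finite := (finite_padSeq ℓ).subset fun v hv => hv.1
  obtain ⟨u, hu⟩ : ∃ u, T ≤ (({v ∈ B | v 1 = u}).ncard : ℝ) := by
    by_contra hcon
    push Not at hcon
    have := ncard_le_mul_fiber hBf (fun v => v 1) (B := Set.univ) Set.finite_univ
      (fun _ _ => trivial) T (fun u _ => (hcon u).le)
    rw [Set.ncard_univ, Nat.card_eq_fintype_card] at this
    linarith
  have hMℓ : (ℓ : ℝ) * M ≤ L := by
    have h1 : (ℓ : ℝ) ≤ k ^ 2 + 1 := by
      have : (ℓ : ℝ) ≤ k := by exact_mod_cast hℓk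
      nlinarith [sq_nonneg ((k : ℝ) - 1)]
    have h2 : (M : ℝ) ≤ s := by rw [hs]; push_cast; linarith
    have h3 : (s : ℝ) ≤ 32 * a ^ 2 * s := by
      have : 1 ≤ 32 * a ^ 2 := by nlinarith
      have : (0 : ℝ) ≤ s := Nat.cast_nonneg _
      nlinarith
    have h4 : (ℓ : ℝ) * M ≤ (k ^ 2 + 1) * (32 * a ^ 2 * s) :=
      mul_le_mul h1 (h2.trans h3) (Nat.cast_nonneg _) (by positivity)
    linarith
  obtain ⟨Y, hYc, hYw, hPle⟩ := clean hD hℓ u (fun y x => Rob G M ℓ y x) {v ∈ B | v 1 = u}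
    (fun v hv => ⟨hv.1.1, hv.1.2.1.1.1, hv.2,
      rob_of_bad hL1 hMℓ (by omega) hv.1.2.1 hv.1.2.2⟩) hd₁0 hd₂0
  set X : Set V := {x | d₁ ≤ ({y | y ∈ Y ∧ Rob G M ℓ y x}.ncard : ℝ)} with hX
  set P : Set (ℕ → V) := {v ∈ {v ∈ B | v 1 = u} | v 0 ∈ Y ∧
    d₁ ≤ ({y | y ∈ Y ∧ Rob G M ℓ y (v ℓ)}.ncard : ℝ)} with hP
  have hPT : T / 2 ≤ P.ncard := by
    have e : ∀ i ≤ k, (δ : ℝ) ^ ℓ * K ^ i / (4 * a * L) ≤ T / 4 := by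
      intro i hi
      rw [hT, div_div, div_le_div_iff₀ (by positivity) (by positivity)]
      have := mul_le_mul_of_nonneg_left (hKa i hi) (show 0 ≤ (δ : ℝ) ^ ℓ * (L * 4) by positivity)
      linarith
    have e1 : d₂ * ((K * δ : ℕ) : ℝ) = (δ : ℝ) ^ ℓ * K ^ 1 / (4 * a * L) := by
      rw [hd₂, hδℓ]; push_cast; field_simp
    have e2 : d₁ * ((K * δ : ℕ) : ℝ) ^ (ℓ - 1) = (δ : ℝ) ^ ℓ * K ^ (ℓ - 1) / (4 * a * L) := by
      rw [hd₁, hδℓ]; push_cast; rw [mul_pow]; field_simp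
    have := e 1 (by omega)
    have := e (ℓ - 1) (by omega)
    rw [e1, e2] at hPle
    linarith
  obtain ⟨y₀, A, hA, hPA⟩ := exists_many_admissible hL1 hℓ u Y hYc X P
    (fun v hv => ⟨hv.1.1.1, hv.1.1.2.1, hv.1.1.2.2, hv.1.2, hv.2.1, hv.2.2⟩)
  -- many fans of length `r`, the remainder of `k` modulo `ℓ`
  set r := k % ℓ with hr
  have hrℓ : r < ℓ := Nat.mod_lt _ (by omega)
  have hrk : r ≤ k := Nat.mod_le _ _
  have hfan : m₀ ≤ {w | Fan G X r m₀ w}.ncard := by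
    by_contra hcon
    have hAc := card_le_of_few_fans (N := m₀) (m₀ := m₀) hD hrℓ y₀ A hA (by omega)
    have hAc' : (A.ncard : ℝ) ≤ L ^ 2 * (1 + k ^ 2) * (K * δ) ^ (ℓ - 1) := by
      have h1 : (A.ncard : ℝ) ≤ (m₀ + m₀ * r * r) * (K * δ) ^ (ℓ - 1) := by exact_mod_cast hAc
      have hrk' : (r : ℝ) ≤ k := by exact_mod_cast hrk
      refine h1.trans (mul_le_mul_of_nonneg_right ?_ (by positivity))
      calc (m₀ : ℝ) + m₀ * r * r = m₀ * (1 + r ^ 2) := by ring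
        _ ≤ L ^ 2 * (1 + k ^ 2) := by gcongr
    have h1 : T / 2 * L ^ 5 ^ ℓ ≤
        ((K * δ : ℕ) : ℝ) * L ^ 5 ^ (ℓ - 1) * (L ^ 2 * (1 + k ^ 2) * (K * δ) ^ (ℓ - 1)) :=
      (mul_le_mul_of_nonneg_right hPT (by positivity)).trans
        (hPA.trans (mul_le_mul_of_nonneg_left hAc' (by positivity)))
    have h2 : (δ : ℝ) ^ ℓ * L ^ 5 ^ ℓ ≤
        δ ^ ℓ * (2 * K ^ ℓ * (1 + k ^ 2) * L ^ (5 ^ (ℓ - 1) + 3)) := by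
      have h3 := mul_le_mul_of_nonneg_left h1 (show 0 ≤ 2 * L by positivity)
      have e1 : 2 * L * (T / 2 * L ^ 5 ^ ℓ) = (δ : ℝ) ^ ℓ * L ^ 5 ^ ℓ := by
        rw [hT]; field_simp
      have hKℓ : (K : ℝ) ^ ℓ = K ^ (ℓ - 1) * K := by rw [← pow_succ]; congr 1; omega
      have e2 : 2 * L * (((K * δ : ℕ) : ℝ) * L ^ 5 ^ (ℓ - 1) *
          (L ^ 2 * (1 + k ^ 2) * (K * δ) ^ (ℓ - 1))) =
          δ ^ ℓ * (2 * K ^ ℓ * (1 + k ^ 2) * L ^ (5 ^ (ℓ - 1) + 3)) := by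
        rw [hKℓ, hδℓ, mul_pow, pow_add]; push_cast; ring
      rwa [e1, e2] at h3
    have h3 := le_of_mul_le_mul_left h2 (by positivity)
    have h4 : 2 * (K : ℝ) ^ ℓ * (1 + k ^ 2) < L := by
      refine lt_of_le_of_lt ?_ hkL
      have := hKa ℓ hℓk
      gcongr
    -- this is where the growth of the exponents `5 ^ ℓ` in `f(ℓ, L)` is needed
    have h5 : 5 ^ (ℓ - 1) + 4 ≤ 5 ^ ℓ := by
      obtain ⟨j, rfl⟩ : ∃ j, ℓ = j + 1 := ⟨ℓ - 1, by omega⟩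
      rw [Nat.add_sub_cancel, pow_succ]
      have : 0 < 5 ^ j := by positivity
      omega
    have h6 : 2 * (K : ℝ) ^ ℓ * (1 + k ^ 2) * L ^ (5 ^ (ℓ - 1) + 3) < L ^ 5 ^ ℓ :=
      calc _ < L * L ^ (5 ^ (ℓ - 1) + 3) := mul_lt_mul_of_pos_right h4 (by positivity)
        _ = L ^ (5 ^ (ℓ - 1) + 4) := by ring
        _ ≤ _ := pow_le_pow_right₀ hL1 h5
    linarith
  -- `m₀` vertices with fans suffice as the side `W` of the dense relation to `Y`
  have hff : {w | Fan G X r m₀ w}.Finite := Set.toFinite _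
  rw [Set.ncard_eq_toFinset_card _ hff] at hfan
  obtain ⟨W, hW, hWc⟩ := Finset.exists_subset_card_eq hfan
  have hWm : ∀ w ∈ W, Fan G X r m₀ w := fun w hw => by simpa using hW hw
  rw [pow_one] at n₁
  have n₁' : (s : ℝ) * (K * δ : ℕ) ≤ m₀ * (d₁ / 2) / 2 := by push_cast; exact n₁
  have hWrob : ∀ w ∈ W, d₁ / 2 ≤ ({y | y ∈ Y ∧ Rob G M (r + ℓ) w y}.ncard : ℝ) := by
    intro w hw
    refine rob_of_fan Y (by omega) hm₀0 hd₁0 (hWm w hw) (fun x hx => ?_) ?_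
    · refine le_trans hx (Nat.cast_le.2 (Set.ncard_le_ncard ?_ (Set.toFinite _)))
      exact fun y hy => ⟨hy.1, hy.2.symm⟩
    · have h1 : (s : ℝ) * Y.card ≤ s * (K * δ : ℕ) :=
        mul_le_mul_of_nonneg_left (Nat.cast_le.2 hYc) (Nat.cast_nonneg _)
      have h2 : 0 ≤ m₀ * d₁ := by positivity
      have h3 : (m₀ : ℝ) * (d₁ / 2) / 2 = m₀ * d₁ / 4 := by ring
      linarith
  obtain ⟨A', Y', X', hA's, hY's, hX's, hAY, hYX⟩ := exists_three_sets (s := s)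
    (Nat.mul_pos hK hδ0) hD hℓ u Y W hYc hm₀0 hWc hsm hWrob hYw n₁' n₂
    (by
      push_cast
      rw [mul_pow, hd₂]
      have := mul_le_mul_of_nonneg_left n₃ (show 0 ≤ (δ : ℝ) ^ (ℓ - 1) by positivity)
      linarith)
    (by
      push_cast
      rw [mul_pow, hd₂, hδℓ']
      have := mul_le_mul_of_nonneg_left n₄ (show 0 ≤ (δ : ℝ) ^ (ℓ - 2) by positivity)
      calc (m₀ : ℝ) ^ s * (K ^ (ℓ - 2) * δ ^ (ℓ - 2) * s)
          = δ ^ (ℓ - 2) * ((m₀ : ℝ) ^ s * (K ^ (ℓ - 2) * s)) := by ring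
        _ ≤ _ := this
        _ = _ := by rw [hd₁]; ring)
  have hkq : k / ℓ * ℓ + r = k := Nat.div_add_mod' k ℓ
  have hq : 1 ≤ k / ℓ := Nat.div_pos hℓk (by omega)
  have hch := rob_chain (by omega) hq A' Y' X' (by omega) (by omega) hAY hYX
  rw [hkq] at hch
  refine contains_of_rob m A' ?_ fun a ha b hb _ => hch a ha b hb
  have : t ≤ nH t k m := Nat.le_add_right _ _
  omega

/-! ### The final count -/

lemma ncard_neighborSet_le_maxDeg (G : SimpleGraph V) (v : V) :
    (G.neighborSet v).ncard ≤ maxDeg G := by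
  refine le_csSup ?_ ⟨v, rfl⟩
  exact (Set.finite_range fun v => (G.neighborSet v).ncard).bddAbove

/-- Each sequence in `B` extends, in a given position, to at most `D ^ (N - l)` walks of
length `N`. -/
lemma extend_count {G : SimpleGraph V} {D : ℕ} (hD : ∀ v, (G.neighborSet v).ncard ≤ D) {l : ℕ}
    (B : Set (ℕ → V)) (hB : B.Finite) (i : ℕ) {N : ℕ} (hN : i + l ≤ N) :
    ({u : ℕ → V | PadSeq N u ∧ WalkSeq G N u ∧ trunc l (shiftSeq i u) ∈ B}.ncard : ℝ) ≤
      D ^ (N - l) * B.ncard := by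
  induction i generalizing N with
  | zero =>
    set A := {u : ℕ → V | PadSeq N u ∧ WalkSeq G N u ∧ trunc l (shiftSeq 0 u) ∈ B} with hA
    have h := step_count (A := A) (i₀ := l) (by omega) (fun q hq => hq.1)
      (fun i f => G.neighborSet (f i)) (fun _ => D)
      (fun q hq i _ hi => by rw [trunc_apply q le_rfl]; exact hq.2.1 i hi) (fun i f _ _ => hD _)
    have h2 : (trunc l '' A).ncard ≤ B.ncard := by
      refine Set.ncard_le_ncard ?_ hB
      rintro _ ⟨q, hq, rfl⟩
      have h0 : shiftSeq 0 q = q := by funext a; simp [shiftSeq]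
      have := hq.2.2
      rwa [h0] at this
    have h3 := h.trans (Nat.mul_le_mul_left _ h2)
    simp only [Finset.prod_const, Nat.card_Ico] at h3
    exact_mod_cast h3
  | succ i ih =>
    obtain ⟨N, rfl⟩ : ∃ N', N = N' + 1 := ⟨N - 1, by omega⟩
    have hfin : ∀ N i, {u : ℕ → V | PadSeq N u ∧ WalkSeq G N u ∧
        trunc l (shiftSeq i u) ∈ B}.Finite := fun N i => (finite_padSeq N).subset fun u hu => hu.1
    have h := ncard_le_mul_fiber (hfin (N + 1) (i + 1)) (shiftSeq 1) (hfin N i) ?_ (D : ℝ) ?_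
    · refine h.trans ?_
      have h2 := mul_le_mul_of_nonneg_left (ih (N := N) (by omega)) (Nat.cast_nonneg (α := ℝ) D)
      refine h2.trans (le_of_eq ?_)
      rw [show N + 1 - l = (N - l) + 1 by omega]
      ring
    · rintro u ⟨hp, hw, hb⟩
      refine ⟨PadSeq.shift (by rwa [add_comm]), fun a ha => hw (1 + a) (by omega), ?_⟩
      have : shiftSeq i (shiftSeq 1 u) = shiftSeq (i + 1) u := by
        funext a; simp only [shiftSeq]; congr 1; omega
      rwa [this]
    · intro b _
      refine Nat.cast_le.2 (le_trans ?_ (hD (b 0)))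
      refine Set.ncard_le_ncard_of_injOn (fun u => u 0) ?_ ?_ (Set.toFinite _)
      · rintro u ⟨hu, rfl⟩
        exact (hu.2.1 0 (by omega)).symm
      · intro u hu u' hu' h
        exact shift_injective h (hu.2.trans hu'.2.symm)

/-- If for every `l ≤ k` there are few admissible paths of length `l` that are not good, then few
paths of length `2k` have a subpath of length `k` that is not good. -/
lemma count_of_few_bad {G : SimpleGraph V} {k K δ : ℕ} {L c : ℝ} (hk : 1 ≤ k) (hK : 1 ≤ K)
    (hc : 0 ≤ c) (hD : ∀ v, (G.neighborSet v).ncard ≤ K * δ)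
    (hB : ∀ l, 1 ≤ l → l ≤ k →
      ({v : ℕ → V | PadSeq l v ∧ Admissible G L l v ∧ ¬ Good G L l v}.ncard : ℝ) ≤ c * δ ^ l) :
    ({u : ℕ → V | PadSeq (2 * k) u ∧ PathSeq G (2 * k) u ∧
        ∃ j, j ≤ k ∧ ¬ Good G L k (fun a => u (j + a))}.ncard : ℝ) ≤
      ((2 * k + 1) * (k + 1) : ℕ) * (K ^ (2 * k) * (c * δ ^ (2 * k))) := by
  classical
  let B : ℕ → Set (ℕ → V) := fun l => {v | PadSeq l v ∧ Admissible G L l v ∧ ¬ Good G L l v}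
  let E : ℕ × ℕ → Set (ℕ → V) := fun x => {u | PadSeq (2 * k) u ∧ WalkSeq G (2 * k) u ∧
    trunc x.2 (shiftSeq x.1 u) ∈ B x.2}
  let I := (Finset.range (2 * k + 1) ×ˢ Finset.range (k + 1)).filter
    fun x => 0 < x.2 ∧ x.1 + x.2 ≤ 2 * k
  have hsub : {u : ℕ → V | PadSeq (2 * k) u ∧ PathSeq G (2 * k) u ∧
        ∃ j, j ≤ k ∧ ¬ Good G L k (fun a => u (j + a))} ⊆ ⋃ x ∈ I, E x := by
    rintro u ⟨hp, hpath, j, hj, hg⟩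
    obtain ⟨i, l, hl, hil, ha, hb⟩ := exists_bad_sub (p := shiftSeq j u) (by omega)
      (hpath.sub (i := j) (j := k) (by omega)) hg
    have hs : shiftSeq i (shiftSeq j u) = shiftSeq (j + i) u := by
      funext a; simp only [shiftSeq]; congr 1; omega
    rw [hs] at ha hb
    have ht : ∀ b ≤ l, trunc l (shiftSeq (j + i) u) b = shiftSeq (j + i) u b :=
      fun b hb => trunc_apply _ hb
    simp only [Set.mem_iUnion]
    refine ⟨(j + i, l), ?_, hp, hpath.1, padSeq_trunc _ _, ?_, ?_⟩
    · simp only [I, Finset.mem_filter, Finset.mem_product, Finset.mem_range]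
      omega
    · exact adm_congr (fun b hb => (ht b hb).symm) ha
    · exact fun h => hb (good_congr ht h)
  have hfin : (⋃ x ∈ I, E x).Finite := by
    refine (finite_padSeq (2 * k)).subset fun u hu => ?_
    simp only [Set.mem_iUnion] at hu
    obtain ⟨x, _, hx⟩ := hu
    exact hx.1
  have hE : ∀ x ∈ I, ((E x).ncard : ℝ) ≤ K ^ (2 * k) * (c * δ ^ (2 * k)) := by
    rintro ⟨i, l⟩ hx
    simp only [I, Finset.mem_filter, Finset.mem_product, Finset.mem_range] at hx
    obtain ⟨⟨_, hlk⟩, hl, hil⟩ := hx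
    have h1 := extend_count hD (B l) ((finite_padSeq l).subset fun v hv => hv.1) i hil
    have h2 := hB l hl (by omega)
    have hK1 : (1 : ℝ) ≤ K := by exact_mod_cast hK
    refine h1.trans ?_
    push_cast
    calc ((K : ℝ) * δ) ^ (2 * k - l) * (B l).ncard
        ≤ (K * δ) ^ (2 * k - l) * (c * δ ^ l) := by gcongr
      _ = K ^ (2 * k - l) * (c * (δ ^ (2 * k - l) * δ ^ l)) := by rw [mul_pow]; ring
      _ = K ^ (2 * k - l) * (c * δ ^ (2 * k)) := by
          rw [← pow_add, show 2 * k - l + l = 2 * k by omega]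
      _ ≤ _ := by
          gcongr
          omega
  have hI : I.card ≤ (2 * k + 1) * (k + 1) :=
    (Finset.card_filter_le _ _).trans (by simp)
  have h1 := (Set.ncard_le_ncard hsub hfin).trans (Finset.set_ncard_biUnion_le I E)
  calc _ ≤ ((∑ x ∈ I, (E x).ncard : ℕ) : ℝ) := Nat.cast_le.2 h1
    _ = ∑ x ∈ I, ((E x).ncard : ℝ) := by push_cast; rfl
    _ ≤ I.card * (K ^ (2 * k) * (c * δ ^ (2 * k))) := by
        rw [← nsmul_eq_mul]; exact Finset.sum_le_card_nsmul _ _ _ hE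
    _ ≤ _ := by gcongr

/-- The hypothesis on the minimum degree gives the power of `L` needed in
`contains_of_many_bad`. -/
lemma exponent_le {h k : ℕ} (hh : 1 ≤ h) (hk : 1 ≤ k) :
    2 * (h + 2 * k + 1) + 4 ≤ 100 ^ k * h := by
  have h1 : 100 * k ≤ 100 ^ k := by
    obtain ⟨j, rfl⟩ : ∃ j, k = j + 1 := ⟨k - 1, by omega⟩
    have : j < 100 ^ j := Nat.lt_pow_self (by norm_num)
    rw [pow_succ]; omega
  have h2 := Nat.mul_le_mul_right h h1
  nlinarith [Nat.mul_le_mul hh hk]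

/-- **Lemma 4.7.** With `H = F^{2k-1}`: there are constants `L0` and `C`
such that for `L ≥ L0` and `n` large, if `G` is an `H`-free `K`-almost-regular graph on `n`
vertices with minimum degree `δ ≥ L^{100^k·|V(H)|}`, then the number of paths
`u_{-k} … u_k` of length `2k` having a subpath `u_j … u_{j+k}` (for some `-k ≤ j ≤ 0`) that
is not `L`-good is at most `C·n·δ^{2k}/L`. -/
theorem count_paths_with_not_good_half
    (t : ℕ) (m : Fin t → Fin t → ℕ)
    (hsymm : ∀ a b, m a b = m b a) (hirr : ∀ a, m a a = 0)
    (k K : ℕ) (hk : 1 ≤ k) (hK : 1 ≤ K) :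
    ∃ (L0 C : ℝ) (n0 : ℕ), 1 < L0 ∧ 0 < C ∧
      ∀ n : ℕ, n0 ≤ n → ∀ L : ℝ, L0 ≤ L → ∀ G : SimpleGraph (Fin n),
        ¬ ContainsMultiSubdiv G t m (2 * k) →
        maxDeg G ≤ K * minDeg G →
        L ^ (100 ^ k * nH t k m) ≤ (minDeg G : ℝ) →
        (Set.ncard {u : ℕ → Fin n | PadSeq (2 * k) u ∧ PathSeq G (2 * k) u ∧
            ∃ j, j ≤ k ∧ ¬ Good G L k (fun a => u (j + a))} : ℝ) ≤
          C * n * (minDeg G : ℝ) ^ (2 * k) / L := by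
  set h := nH t k m with hh
  have hK1 : (1 : ℝ) ≤ K := by exact_mod_cast hK
  have ha1 : 1 ≤ (K : ℝ) ^ k := one_le_pow₀ hK1
  have hL0 : 1 < 32 * ((K : ℝ) ^ k) ^ 2 * (h + 2 * k + 1 : ℕ) * (k ^ 2 + 1) := by
    have h1 : 1 ≤ ((K : ℝ) ^ k) ^ 2 := one_le_pow₀ ha1
    have h2 : (1 : ℝ) ≤ (h + 2 * k + 1 : ℕ) := by exact_mod_cast Nat.le_add_left 1 _
    have h3 : (1 : ℝ) ≤ (k : ℝ) ^ 2 + 1 := by nlinarith [sq_nonneg (k : ℝ)]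
    have h4 := one_le_mul_of_one_le_of_one_le (one_le_mul_of_one_le_of_one_le h1 h2) h3
    linarith
  refine ⟨_, ((2 * k + 1) * (k + 1) : ℕ) * (K : ℝ) ^ (2 * k), 0, hL0, by positivity, ?_⟩
  intro n _ L hL G hfree hdeg hδ
  have hL1 : 1 < L := hL0.trans_le hL
  -- the subdivision of the multigraph without vertices is contained in every graph
  have hpos : 1 ≤ h := by
    by_contra h0
    have ht : t = 0 := by rw [hh, nH] at h0; omega
    subst ht
    exact hfree ⟨fun i => i.elim0, fun i => i.elim0, fun i => i.elim0, fun i => i.elim0,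
      fun i => i.elim0, fun i => i.elim0⟩
  have hδ0 : 0 < minDeg G := by
    have : (0 : ℝ) < minDeg G := lt_of_lt_of_le (by positivity) hδ
    exact_mod_cast this
  have hD : ∀ v, (G.neighborSet v).ncard ≤ K * minDeg G := fun v =>
    (ncard_neighborSet_le_maxDeg G v).trans hdeg
  have hδ' : L ^ (2 * (h + 2 * k + 1) + 4) ≤ (minDeg G : ℝ) :=
    (pow_le_pow_right₀ hL1.le (exponent_le hpos hk)).trans hδ
  have hc : 0 ≤ (n : ℝ) / L := by positivity
  refine (count_of_few_bad (L := L) hk hK hc hD fun l hl hlk => ?_).trans (le_of_eq (by ring))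
  rcases hl.eq_or_lt with rfl | hl2
  · have : {v : ℕ → Fin n | PadSeq 1 v ∧ Admissible G L 1 v ∧ ¬ Good G L 1 v} = ∅ :=
      Set.eq_empty_of_forall_notMem fun v hv => hv.2.2 (good_one hL1.le hv.2.1.1)
    rw [this, Set.ncard_empty, Nat.cast_zero]
    positivity
  · by_contra hcon
    refine hfree (contains_of_many_bad m hK hl2 hlk hD hδ0 hL hδ' ?_)
    rw [Fintype.card_fin]
    refine lt_of_le_of_lt (le_of_eq (by ring)) (not_le.1 hcon)
end

section
/- Let k ≥ 1 and h ≥ 1 be integers and K ≥ 1. There exists a constant C, depending only on k, h and K, such that the following holds: if δ ≥ 1 and G is a graph on n vertices with maximum degree at most Kδ, then the number of paths u_{−k}u_{−k+1}…u_k of length 2k in G satisfying both (i) the pair (u_{−ℓ}, u_ℓ) is (i,j)-poor (with parameters k, h, K, δ) for every 1 ≤ ℓ ≤ k and every 0 ≤ i, j ≤ k−1, and (ii) there exist 1 ≤ α, β ≤ k with α + β > k such that there exist at least (h+2)(2k+1)+1 pairwise internally vertex-disjoint paths of length α+β between u_{−α} and u_{β}, is at most C·n·δ^{2k−1}. -/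
/-!
Write `D = K δ`, and fix `α, β`. Put `ℓ = α + β - k`, `i = k - β = α - ℓ` and `j = k - α = β - ℓ`.
The two segments of the path running outwards from `u_{-ℓ}` to `u_{-α}` and from `u_ℓ` to `u_β`
have lengths `i` and `j`, and `2k - i - j = α + β`; so if there are many disjoint paths of length
`α + β` between `u_{-α}` and `u_β`, these segments form one of the pairs `(P, Q)` counted in the
definition of `(i, j)`-richness of `(u_{-ℓ}, u_ℓ)`. Since that pair is poor, once the middle part
`u_{-ℓ}, …, u_ℓ` is chosen (at most `n D^{2ℓ}` ways) there are at most `c D^{i+j-1}` choices for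
`(P, Q)`, and then at most `D^{(k-α)+(k-β)} = D^{i+j}` choices for the two remaining ends. As
`2ℓ + 2(i+j) = 2k`, this gives `c n D^{2k-1}` paths (`poor_count_fixed`), and it remains to sum over
the at most `k²` pairs `(α, β)`. For `i = j = 0` the coefficient `c` vanishes, so working with
integer exponents covers that case as well.
-/

open SimpleGraph

variable {V : Type*} [Fintype V] [DecidableEq V]

/-! ### Counting walks in a graph of bounded degree -/

/-- Double counting: if `f` maps `s` into `t` with fibres of size at most `B`, then
`|s| ≤ |t| B`. -/
theorem ncard_le_of_fibers {A B' : Type*} {s : Set A} {t : Set B'} (f : A → B')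
    (hs : s.Finite) (ht : t.Finite) (hf : ∀ a ∈ s, f a ∈ t) (B : ℝ)
    (hB : ∀ b ∈ t, (({a ∈ s | f a = b}).ncard : ℝ) ≤ B) :
    (s.ncard : ℝ) ≤ t.ncard * B := by
  classical
  rw [Set.ncard_eq_toFinset_card s hs, Set.ncard_eq_toFinset_card t ht,
    Finset.card_eq_sum_card_fiberwise (f := f) (t := ht.toFinset)
      (fun a ha => by simpa using hf a (by simpa using ha))]
  push_cast
  rw [← nsmul_eq_mul]
  refine Finset.sum_le_card_nsmul _ _ _ fun b hb => ?_
  refine le_trans (le_of_eq ?_) (hB b (by simpa using hb))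
  rw [← Set.ncard_coe_finset]
  congr 2
  ext a
  simp

theorem finite_padSeq_s18 (m : ℕ) : {p : ℕ → V | PadSeq m p}.Finite := by
  refine Set.Finite.of_injOn (f := fun p (a : Fin (m + 1)) => p a) (t := Set.univ)
    (fun _ _ => Set.mem_univ _) ?_ Set.finite_univ
  intro p hp q hq h
  have h' : ∀ a, a ≤ m → p a = q a := fun a ha => congrFun h ⟨a, by omega⟩
  funext a
  rcases le_total a m with ha | ha
  · exact h' a ha
  · rw [hp a ha, hq a ha, h' m le_rfl]

/-- Walks of length `m` in `G` starting at `x`, as sequences that are constant from `m` on. -/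
def WalksFrom (G : SimpleGraph V) (m : ℕ) (x : V) : Set (ℕ → V) :=
  {p | PadSeq m p ∧ p 0 = x ∧ ∀ i, i < m → G.Adj (p i) (p (i + 1))}

theorem finite_walksFrom (G : SimpleGraph V) (m : ℕ) (x : V) : (WalksFrom G m x).Finite :=
  (finite_padSeq_s18 m).subset fun _ hp => hp.1

theorem ncard_walksFrom_le (G : SimpleGraph V) {D : ℝ} (hD : 0 ≤ D)
    (hdeg : ∀ v, ((G.neighborSet v).ncard : ℝ) ≤ D) (m : ℕ) (x : V) :
    ((WalksFrom G m x).ncard : ℝ) ≤ D ^ m := by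
  induction m generalizing x with
  | zero =>
    rw [pow_zero]
    have : (WalksFrom G 0 x).ncard ≤ 1 := by
      rw [Set.ncard_le_one (finite_walksFrom G 0 x)]
      intro p hp q hq
      funext a
      rw [hp.1 a (Nat.zero_le a), hq.1 a (Nat.zero_le a), hp.2.1, hq.2.1]
    exact_mod_cast this
  | succ m ih =>
    have h := ncard_le_of_fibers (s := WalksFrom G (m + 1) x) (t := G.neighborSet x)
      (fun p => p 1) (finite_walksFrom G _ x) (Set.toFinite _) ?_ (D ^ m) ?_
    · refine h.trans ?_
      rw [pow_succ']
      exact mul_le_mul_of_nonneg_right (hdeg x) (pow_nonneg hD m)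
    · intro p hp
      have := hp.2.2 0 (by omega)
      rw [hp.2.1] at this
      exact this
    · intro y _
      refine le_trans ?_ (ih y)
      norm_cast
      -- dropping the first vertex is injective, as that vertex is `x`
      refine Set.ncard_le_ncard_of_injOn (fun p a => p (a + 1)) ?_ ?_ (finite_walksFrom G m y)
      · rintro p ⟨hp, rfl⟩
        exact ⟨fun a ha => hp.1 (a + 1) (by omega), rfl, fun a ha => hp.2.2 (a + 1) (by omega)⟩
      · rintro p ⟨hp, _⟩ q ⟨hq, _⟩ h
        funext a
        cases a with
        | zero => rw [hp.2.1, hq.2.1]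
        | succ a => exact congrFun h a

theorem ncard_walks_le (G : SimpleGraph V) {D : ℝ} (hD : 0 ≤ D)
    (hdeg : ∀ v, ((G.neighborSet v).ncard : ℝ) ≤ D) (m : ℕ) :
    (({p : ℕ → V | p ∈ WalksFrom G m (p 0)}).ncard : ℝ) ≤ Fintype.card V * D ^ m := by
  have h := ncard_le_of_fibers (s := {p : ℕ → V | p ∈ WalksFrom G m (p 0)}) (t := Set.univ)
    (fun p => p 0) ((finite_padSeq_s18 m).subset fun _ hp => hp.1) Set.finite_univ
    (fun _ _ => Set.mem_univ _) (D ^ m) ?_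
  · rwa [Set.ncard_univ, Nat.card_eq_fintype_card] at h
  · intro x _
    refine le_trans ?_ (ncard_walksFrom_le G hD hdeg m x)
    norm_cast
    refine Set.ncard_le_ncard ?_ (finite_walksFrom G m x)
    rintro p ⟨hp, rfl⟩
    exact hp

/-! ### Segments of a path -/

/-- The stretch of `u` of length `m` running forwards from index `s`, padded. -/
def fwd (s m : ℕ) (u : ℕ → V) : ℕ → V := fun a => u (s + min a m)

/-- The stretch of `u` of length `m` running backwards from index `s`, padded. -/
def bwd (s m : ℕ) (u : ℕ → V) : ℕ → V := fun a => u (s - min a m)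

theorem padSeq_fwd (s m : ℕ) (u : ℕ → V) : PadSeq m (fwd s m u) := fun a ha => by
  simp [fwd, ha]

theorem padSeq_bwd (s m : ℕ) (u : ℕ → V) : PadSeq m (bwd s m u) := fun a ha => by
  simp [bwd, ha]

theorem pathSeq_fwd {G : SimpleGraph V} {N s m : ℕ} {u : ℕ → V} (hu : PathSeq G N u)
    (h : s + m ≤ N) : PathSeq G m (fwd s m u) := by
  refine ⟨fun a ha => ?_, fun a b hab hb => ?_⟩
  · have := hu.1 (s + a) (by omega)
    simpa [fwd, min_eq_left ha.le, min_eq_left (Nat.succ_le_of_lt ha), add_assoc] using this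
  · simp only [fwd]
    exact hu.2 _ _ (by omega) (by omega)

theorem pathSeq_bwd {G : SimpleGraph V} {N s m : ℕ} {u : ℕ → V} (hu : PathSeq G N u)
    (hs : s ≤ N) (h : m ≤ s) : PathSeq G m (bwd s m u) := by
  refine ⟨fun a ha => ?_, fun a b hab hb => ?_⟩
  · have := (hu.1 (s - (a + 1)) (by omega)).symm
    rw [show s - (a + 1) + 1 = s - a by omega] at this
    simpa only [bwd, min_eq_left ha.le, min_eq_left (Nat.succ_le_of_lt ha)] using this
  · simp only [bwd]
    exact (hu.2 _ _ (by omega) (by omega)).symm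

theorem fwd_mem_walksFrom {G : SimpleGraph V} {N s m : ℕ} {u : ℕ → V} (hu : PathSeq G N u)
    (h : s + m ≤ N) : fwd s m u ∈ WalksFrom G m (u s) :=
  ⟨padSeq_fwd s m u, by simp [fwd], (pathSeq_fwd hu h).1⟩

theorem bwd_mem_walksFrom {G : SimpleGraph V} {N s m : ℕ} {u : ℕ → V} (hu : PathSeq G N u)
    (hs : s ≤ N) (h : m ≤ s) : bwd s m u ∈ WalksFrom G m (u s) :=
  ⟨padSeq_bwd s m u, by simp [bwd], (pathSeq_bwd hu hs h).1⟩

/-! ### Paths with a poor pair, for fixed `α, β` -/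

/-- The number of paths of the required kind for fixed `α, β`: the middle part, the two segments
controlled by poorness, and the two ends are chosen in this order. -/
theorem poor_count_fixed (G : SimpleGraph V) (k h : ℕ) (K δ : ℝ) (hD : 0 < K * δ)
    (hdeg : ∀ v, ((G.neighborSet v).ncard : ℝ) ≤ K * δ)
    (α β : ℕ) (hα : 1 ≤ α) (hαk : α ≤ k) (hβ : 1 ≤ β) (hβk : β ≤ k) (hαβ : k < α + β) :
    (Set.ncard {u : ℕ → V | PadSeq (2 * k) u ∧ PathSeq G (2 * k) u ∧
        (∀ ℓ, 1 ≤ ℓ → ℓ ≤ k → ∀ i j, i < k → j < k →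
          ¬ Rich G k h K δ i j (u (k - ℓ)) (u (k + ℓ))) ∧
        ManyDisjointPaths G (α + β) (u (k - α)) (u (k + β))
          ((h + 2) * (2 * k + 1) + 1)} : ℝ) ≤
      ((2 * ((k - β) + (k - α)) * h * (2 * k + 1) + 2 * ((k - β) + 1) * (k - α) : ℕ) : ℝ) *
        Fintype.card V * (K * δ) ^ (2 * k - 1) := by
  set S := {u : ℕ → V | PadSeq (2 * k) u ∧ PathSeq G (2 * k) u ∧
        (∀ ℓ, 1 ≤ ℓ → ℓ ≤ k → ∀ i j, i < k → j < k →
          ¬ Rich G k h K δ i j (u (k - ℓ)) (u (k + ℓ))) ∧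
        ManyDisjointPaths G (α + β) (u (k - α)) (u (k + β))
          ((h + 2) * (2 * k + 1) + 1)} with hS
  obtain ⟨l, hl⟩ : ∃ l, l = α + β - k := ⟨_, rfl⟩
  obtain ⟨i, hi⟩ : ∃ i, i = k - β := ⟨_, rfl⟩
  obtain ⟨j, hj⟩ : ∃ j, j = k - α := ⟨_, rfl⟩
  set D := K * δ with hDdef
  rw [← hi, ← hj]
  obtain ⟨c, hc⟩ : ∃ c : ℝ,
    c = ((2 * (i + j) * h * (2 * k + 1) + 2 * (i + 1) * j : ℕ) : ℝ) := ⟨_, rfl⟩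
  rw [← hc]
  have hc0 : 0 ≤ c := by rw [hc]; positivity
  have hSfin : S.Finite := (finite_padSeq_s18 (2 * k)).subset fun _ hu => hu.1
  -- the middle part `u_{-ℓ}, …, u_ℓ`
  have h1 := ncard_le_of_fibers (s := S) (t := {p : ℕ → V | p ∈ WalksFrom G (2 * l) (p 0)})
    (fwd (k - l) (2 * l)) hSfin ((finite_padSeq_s18 (2 * l)).subset fun _ hp => hp.1) ?_
    (c * D ^ ((i : ℤ) + (j : ℤ) - 1) * (D ^ j * D ^ i)) ?_
  · refine h1.trans ((mul_le_mul_of_nonneg_right (ncard_walks_le G hD.le hdeg (2 * l))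
      (by positivity)).trans (le_of_eq ?_))
    have e : D ^ (2 * l) * D ^ ((i : ℤ) + (j : ℤ) - 1) * (D ^ j * D ^ i) = D ^ (2 * k - 1) := by
      simp only [← zpow_natCast]
      rw [← zpow_add₀ hD.ne', ← zpow_add₀ hD.ne', ← zpow_add₀ hD.ne']
      congr 1
      omega
    rw [← e]
    ring
  · intro u hu
    have := fwd_mem_walksFrom (s := k - l) (m := 2 * l) hu.2.1 (by omega)
    simpa [fwd] using this
  · intro w _
    rcases Set.eq_empty_or_nonempty {u ∈ S | fwd (k - l) (2 * l) u = w} with he | ⟨u₀, hu₀, hw⟩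
    · rw [he, Set.ncard_empty, Nat.cast_zero]
      positivity
    have hends : ∀ u, fwd (k - l) (2 * l) u = w → u (k - l) = w 0 ∧ u (k + l) = w (2 * l) := by
      rintro u rfl
      refine ⟨by simp [fwd], ?_⟩
      simp only [fwd, min_self]
      congr 1
      omega
    have hpoor := hu₀.2.2.1 l (by omega) (by omega) i j (by omega) (by omega)
    have hne : u₀ (k - l) ≠ u₀ (k + l) := hu₀.2.1.2 _ _ (by omega) (by omega)
    rw [(hends u₀ hw).1, (hends u₀ hw).2] at hpoor hne
    set T := {PQ : (ℕ → V) × (ℕ → V) |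
      PathSeq G i PQ.1 ∧ PQ.1 0 = w 0 ∧ PadSeq i PQ.1 ∧
      PathSeq G j PQ.2 ∧ PQ.2 0 = w (2 * l) ∧ PadSeq j PQ.2 ∧
      ManyDisjointPaths G (2 * k - i - j) (PQ.1 i) (PQ.2 j) ((h + 2) * (2 * k + 1) + 1)} with hT
    have hTc : (T.ncard : ℝ) ≤ c * D ^ ((i : ℤ) + (j : ℤ) - 1) := by
      rw [hc]
      by_contra hcon
      exact hpoor ⟨hne, not_le.mp hcon⟩
    have hTfin : T.Finite := ((finite_padSeq_s18 i).prod (finite_padSeq_s18 j)).subset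
      fun _ hp => ⟨hp.2.2.1, hp.2.2.2.2.2.1⟩
    -- the segments `P` from `u_{-ℓ}` to `u_{-α}` and `Q` from `u_ℓ` to `u_β`
    have h2 := ncard_le_of_fibers (s := {u ∈ S | fwd (k - l) (2 * l) u = w}) (t := T)
      (fun u => (bwd (k - l) i u, fwd (k + l) j u)) (hSfin.subset fun _ hu => hu.1) hTfin ?_
      (D ^ j * D ^ i) ?_
    · exact h2.trans (mul_le_mul_of_nonneg_right hTc (by positivity))
    · rintro u ⟨hu, huw⟩
      refine ⟨pathSeq_bwd hu.2.1 (by omega) (by omega), ?_, padSeq_bwd _ _ _,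
        pathSeq_fwd hu.2.1 (by omega), ?_, padSeq_fwd _ _ _, ?_⟩
      · simpa [bwd] using (hends u huw).1
      · simpa [fwd] using (hends u huw).2
      · have := hu.2.2.2
        simp only [bwd, fwd, min_self]
        rwa [show 2 * k - i - j = α + β by omega, show k - l - i = k - α by omega,
          show k + l + j = k + β by omega]
    · rintro ⟨P, Q⟩ _
      -- the two remaining ends, from `u_{-α}` to `u_{-k}` and from `u_β` to `u_k`
      have h3 : ({u ∈ {u ∈ S | fwd (k - l) (2 * l) u = w} |
          (bwd (k - l) i u, fwd (k + l) j u) = (P, Q)}).ncard ≤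
          (WalksFrom G j (P i) ×ˢ WalksFrom G i (Q j)).ncard := by
        refine Set.ncard_le_ncard_of_injOn (fun u => (bwd (k - α) j u, fwd (k + β) i u)) ?_ ?_
          ((finite_walksFrom G _ _).prod (finite_walksFrom G _ _))
        · rintro u ⟨⟨hu, _⟩, hPQ⟩
          obtain ⟨rfl, rfl⟩ := Prod.mk.inj hPQ
          refine ⟨?_, ?_⟩
          · have := bwd_mem_walksFrom (s := k - α) (m := j) hu.2.1 (by omega) (by omega)
            simp only [bwd, min_self]
            rwa [show k - l - i = k - α by omega]
          · have := fwd_mem_walksFrom (s := k + β) (m := i) hu.2.1 (by omega)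
            simp only [fwd, min_self]
            rwa [show k + l + j = k + β by omega]
        · rintro u ⟨⟨hu, huw⟩, hPQ⟩ v ⟨⟨hv, hvw⟩, hPQ'⟩ huv
          obtain ⟨e1, e2⟩ := Prod.mk.inj (hPQ.trans hPQ'.symm)
          obtain ⟨e3, e4⟩ := Prod.mk.inj huv
          have e5 := huw.trans hvw.symm
          have key : ∀ a, a ≤ 2 * k → u a = v a := by
            intro a ha
            by_cases c1 : a ≤ k - α
            · have := congrFun e3 (k - α - a)
              simp only [bwd] at this
              rwa [show k - α - min (k - α - a) j = a by omega] at this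
            by_cases c2 : a ≤ k - l
            · have := congrFun e1 (k - l - a)
              simp only [bwd] at this
              rwa [show k - l - min (k - l - a) i = a by omega] at this
            by_cases c3 : a ≤ k + l
            · have := congrFun e5 (a - (k - l))
              simp only [fwd] at this
              rwa [show k - l + min (a - (k - l)) (2 * l) = a by omega] at this
            by_cases c4 : a ≤ k + β
            · have := congrFun e2 (a - (k + l))
              simp only [fwd] at this
              rwa [show k + l + min (a - (k + l)) j = a by omega] at this
            · have := congrFun e4 (a - (k + β))
              simp only [fwd] at this
              rwa [show k + β + min (a - (k + β)) i = a by omega] at this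
          funext a
          rcases le_total a (2 * k) with ha | ha
          · exact key a ha
          · rw [hu.1 a ha, hv.1 a ha, key _ le_rfl]
      rw [Set.ncard_prod] at h3
      refine le_trans (Nat.cast_le.mpr h3) ?_
      push_cast
      exact mul_le_mul (ncard_walksFrom_le G hD.le hdeg _ _)
        (ncard_walksFrom_le G hD.le hdeg _ _) (by positivity) (by positivity)

/-! ### Summing over `α, β` -/

/-- **Lemma 4.9.** Let `k, h ≥ 1` and `K ≥ 1`. There is a constant `C`
(depending only on `k, h, K`) such that for every `δ ≥ 1` and every graph `G` on `n`
vertices with maximum degree at most `Kδ`, the number of paths `u_{-k} … u_k` (indexed here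
by `u 0, …, u (2k)`) of length `2k` such that every pair `(u_{-ℓ}, u_ℓ)` is `(i,j)`-poor
and for some `1 ≤ α, β ≤ k` with `α + β > k` there are `(h+2)(2k+1)+1` pairwise internally
vertex-disjoint paths of length `α+β` between `u_{-α}` and `u_β`, is at most
`C·n·δ^{2k-1}`. -/
theorem poor_paths_with_disjoint_connections_are_few
    (k h : ℕ) (hk : 1 ≤ k) (hh : 1 ≤ h) (K : ℝ) (hK : 1 ≤ K) :
    ∃ C : ℝ, 0 < C ∧ ∀ (n : ℕ) (G : SimpleGraph (Fin n)) (δ : ℝ), 1 ≤ δ →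
      (∀ v : Fin n, ((G.neighborSet v).ncard : ℝ) ≤ K * δ) →
      (Set.ncard {u : ℕ → Fin n | PadSeq (2 * k) u ∧ PathSeq G (2 * k) u ∧
          (∀ ℓ, 1 ≤ ℓ → ℓ ≤ k → ∀ i j, i < k → j < k →
            ¬ Rich G k h K δ i j (u (k - ℓ)) (u (k + ℓ))) ∧
          ∃ α β, 1 ≤ α ∧ α ≤ k ∧ 1 ≤ β ∧ β ≤ k ∧ k < α + β ∧
            ManyDisjointPaths G (α + β) (u (k - α)) (u (k + β))
              ((h + 2) * (2 * k + 1) + 1)} : ℝ) ≤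
        C * n * δ ^ (2 * k - 1) := by
  obtain ⟨M, hM⟩ : ∃ M : ℕ, M = 2 * (k + k) * h * (2 * k + 1) + 2 * (k + 1) * k := ⟨_, rfl⟩
  have hMpos : 0 < M := by rw [hM]; positivity
  have hK0 : 0 < K := by linarith
  refine ⟨k * k * (M * K ^ (2 * k - 1)), by positivity, ?_⟩
  intro n G δ hδ hdeg
  have hδ0 : 0 < δ := by linarith
  set F : ℕ × ℕ → Set (ℕ → Fin n) := fun q => {u | k < q.1 + q.2 ∧
    PadSeq (2 * k) u ∧ PathSeq G (2 * k) u ∧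
      (∀ ℓ, 1 ≤ ℓ → ℓ ≤ k → ∀ i j, i < k → j < k →
        ¬ Rich G k h K δ i j (u (k - ℓ)) (u (k + ℓ))) ∧
      ManyDisjointPaths G (q.1 + q.2) (u (k - q.1)) (u (k + q.2))
        ((h + 2) * (2 * k + 1) + 1)} with hF
  set I := Finset.Icc 1 k ×ˢ Finset.Icc 1 k with hI
  have hFfin : ∀ q, (F q).Finite := fun q => (finite_padSeq_s18 (2 * k)).subset fun _ hu => hu.2.1
  have hFle : ∀ q ∈ I, ((F q).ncard : ℝ) ≤ M * n * (K * δ) ^ (2 * k - 1) := by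
    rintro ⟨α, β⟩ hq
    simp only [hI, Finset.mem_product, Finset.mem_Icc] at hq
    by_cases hαβ : k < α + β
    · have h1 := poor_count_fixed G k h K δ (by positivity) hdeg α β hq.1.1 hq.1.2 hq.2.1 hq.2.2
        hαβ
      have hset : F (α, β) = {u | PadSeq (2 * k) u ∧ PathSeq G (2 * k) u ∧
          (∀ ℓ, 1 ≤ ℓ → ℓ ≤ k → ∀ i j, i < k → j < k →
            ¬ Rich G k h K δ i j (u (k - ℓ)) (u (k + ℓ))) ∧
          ManyDisjointPaths G (α + β) (u (k - α)) (u (k + β))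
            ((h + 2) * (2 * k + 1) + 1)} := by
        ext u
        simp [hF, hαβ]
      rw [hset]
      refine h1.trans ?_
      rw [Fintype.card_fin]
      gcongr
      rw [hM]
      gcongr <;> omega
    · have : F (α, β) = ∅ := by
        ext u
        simp [hF, hαβ]
      rw [this, Set.ncard_empty, Nat.cast_zero]
      positivity
  have hcover : {u : ℕ → Fin n | PadSeq (2 * k) u ∧ PathSeq G (2 * k) u ∧
          (∀ ℓ, 1 ≤ ℓ → ℓ ≤ k → ∀ i j, i < k → j < k →
            ¬ Rich G k h K δ i j (u (k - ℓ)) (u (k + ℓ))) ∧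
          ∃ α β, 1 ≤ α ∧ α ≤ k ∧ 1 ≤ β ∧ β ≤ k ∧ k < α + β ∧
            ManyDisjointPaths G (α + β) (u (k - α)) (u (k + β))
              ((h + 2) * (2 * k + 1) + 1)} ⊆ ⋃ q ∈ I, F q := by
    rintro u ⟨hpad, hpath, hpoor, α, β, h1, h2, h3, h4, h5, h6⟩
    refine Set.mem_biUnion (x := (α, β)) ?_ ⟨h5, hpad, hpath, hpoor, h6⟩
    simp [hI, h1, h2, h3, h4]
  have hle := (Set.ncard_le_ncard hcover (I.finite_toSet.biUnion fun q _ => hFfin q)).trans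
    (Finset.set_ncard_biUnion_le I F)
  calc _ ≤ ((∑ q ∈ I, (F q).ncard : ℕ) : ℝ) := Nat.cast_le.mpr hle
    _ ≤ I.card • (M * n * (K * δ) ^ (2 * k - 1) : ℝ) := by
        push_cast
        exact Finset.sum_le_card_nsmul _ _ _ hFle
    _ = _ := by
        rw [nsmul_eq_mul, mul_pow, hI, Finset.card_product, Nat.card_Icc]
        push_cast [Nat.add_sub_cancel]
        ring
end
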